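/- arXiv:2402.03983 — 4 statements merged into one kernel-verified Lean document; each statement's English description precedes it below -/
import Mathlib

section
/- Let m ≥ 2 be an integer and M = {M_β}_{|β|≤m} ⊆ ℂ a prescribed family of moments. Then d_m is finite on 𝓜_m^M × 𝓜_m^M, so (𝓜_m^M, d_m) is a metric space, and this metric space is not complete: there exists a d_m-Cauchy sequence in 𝓜_m^M with no limit in 𝓜_m^M. -/
open MeasureTheory Filter Topology
open scoped ENNReal NNReal

noncomputable section
open scoped Classical


abbrev Vd (d : ℕ) := EuclideanSpace ℝ (Fin d)

/-- The total variation measure `|μ|` of a complex measure (realized as the sum of the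
total variations of its real and imaginary parts). -/
def ctv {d : ℕ} (μ : ComplexMeasure (Vd d)) : Measure (Vd d) :=
  μ.re.totalVariation + μ.im.totalVariation

/-- Integral of a complex-valued function against a complex measure. -/
def cint {d : ℕ} (μ : ComplexMeasure (Vd d)) (f : Vd d → ℂ) : ℂ :=
  ((∫ x, f x ∂μ.re.toJordanDecomposition.posPart) -
    (∫ x, f x ∂μ.re.toJordanDecomposition.negPart)) +
  Complex.I * ((∫ x, f x ∂μ.im.toJordanDecomposition.posPart) -
    (∫ x, f x ∂μ.im.toJordanDecomposition.negPart))

/-- The Fourier transform `μ̂(ξ) = ∫ e^{-i x·ξ} dμ(x)` of a complex measure. -/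
def ftc {d : ℕ} (μ : ComplexMeasure (Vd d)) (ξ : Vd d) : ℂ :=
  cint μ (fun x => Complex.exp (-(Complex.I) * ((∑ i, x i * ξ i : ℝ) : ℂ)))

/-- The Fourier-based distance `d_m(μ,ν) = sup_{ξ ≠ 0} |μ̂(ξ)-ν̂(ξ)|/|ξ|^m` (valued in `ℝ≥0∞`). -/
def dm {d : ℕ} (m : ℕ) (μ ν : ComplexMeasure (Vd d)) : ℝ≥0∞ :=
  ⨆ ξ : {ξ : Vd d // ξ ≠ 0}, ENNReal.ofReal (‖ftc μ ξ - ftc ν ξ‖ / ‖(ξ : Vd d)‖ ^ m)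

/-- The finite set of multi-indices `β ∈ ℕ^d` with `|β| ≤ m`. -/
def multiIdx (d m : ℕ) : Finset (Fin d → ℕ) :=
  (Fintype.piFinset fun _ : Fin d => Finset.range (m + 1)).filter fun γ => ∑ i, γ i ≤ m

/-- The set `𝓜_m^M` of complex measures with finite `m`-th absolute moment and
moments prescribed by `M`. -/
def MomentSet (d m : ℕ) (M : (Fin d → ℕ) → ℂ) : Set (ComplexMeasure (Vd d)) :=
  {μ | (∫⁻ x, (‖x‖₊ : ℝ≥0∞) ^ m ∂(ctv μ)) < ⊤ ∧
       ∀ β : Fin d → ℕ, (∑ i, β i) ≤ m →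
         cint μ (fun x => ∏ i, ((x i : ℂ)) ^ (β i)) = M β}

/-- The polynomial `P(ξ) = Σ_{|γ|≤m} (M_γ/γ!) (-iξ)^γ`. -/
def Ppoly (d m : ℕ) (M : (Fin d → ℕ) → ℂ) (ξ : Vd d) : ℂ :=
  ∑ γ ∈ multiIdx d m,
    (M γ / ∏ i, (Nat.factorial (γ i) : ℂ)) * ∏ i, (-(Complex.I) * (ξ i)) ^ (γ i)

/-- The function `φ_δ`. -/
def phiFun (d m : ℕ) (M : (Fin d → ℕ) → ℂ) (δ : ℝ) (ξ : Vd d) : ℂ :=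
  if ξ = 0 then Ppoly d m M 0
  else (Ppoly d m M ξ +
      ((‖ξ‖ ^ (m + 2) * Real.sin (1 / ‖ξ‖ ^ m) * Real.exp (-δ / ‖ξ‖ ^ 2) : ℝ) : ℂ)) *
    ((Real.exp (-‖ξ‖ ^ (2 * m)) : ℝ) : ℂ)

/-- The function `f_δ`. -/
def fdelta (d m : ℕ) (δ : ℝ) (ξ : Vd d) : ℝ :=
  if ξ = 0 then 0
  else ‖ξ‖ ^ (m + 2) * Real.sin (1 / ‖ξ‖ ^ m) * Real.exp (-δ / ‖ξ‖ ^ 2)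

/-- First-order partial derivative in the `i`-th coordinate direction. -/
def pderiv1 {d : ℕ} {F : Type*} [NormedAddCommGroup F] [NormedSpace ℝ F]
    (i : Fin d) (f : Vd d → F) : Vd d → F :=
  fun ξ => fderiv ℝ f ξ (EuclideanSpace.single i 1)

/-- The multi-index partial derivative `D^β = ∂_{ξ_1}^{β_1} ⋯ ∂_{ξ_d}^{β_d}`. -/
def Dmulti {d : ℕ} {F : Type*} [NormedAddCommGroup F] [NormedSpace ℝ F]
    (β : Fin d → ℕ) (f : Vd d → F) : Vd d → F :=
  (List.ofFn fun i : Fin d => (pderiv1 i)^[β i]).foldr (fun op g => op g) f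

theorem jd_sum {α : Type*} [MeasurableSpace α] (s : SignedMeasure α) (p n : Measure α)
    [IsFiniteMeasure p] [IsFiniteMeasure n]
    (h : s = p.toSignedMeasure - n.toSignedMeasure) :
    s.toJordanDecomposition.posPart + n = p + s.toJordanDecomposition.negPart := by
  rw [← Measure.toSignedMeasure_eq_toSignedMeasure_iff, Measure.toSignedMeasure_add,
    Measure.toSignedMeasure_add]
  have h2 := s.toSignedMeasure_toJordanDecomposition
  rw [JordanDecomposition.toSignedMeasure] at h2
  have h3 := h2.trans h
  rw [sub_eq_sub_iff_add_eq_add] at h3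
  exact h3

theorem jd_le {α : Type*} [MeasurableSpace α] (s : SignedMeasure α) (p n : Measure α)
    [IsFiniteMeasure p] [IsFiniteMeasure n]
    (h : s = p.toSignedMeasure - n.toSignedMeasure) :
    s.toJordanDecomposition.posPart ≤ p ∧ s.toJordanDecomposition.negPart ≤ n := by
  have hs := jd_sum s p n h
  obtain ⟨S, hS, -, -, h1, h2⟩ := s.toJordanDecomposition.exists_compl_positive_negative
  set P := s.toJordanDecomposition.posPart
  set N := s.toJordanDecomposition.negPart
  have key : ∀ A, P A + n A = p A + N A := fun A => by
    have := congrArg (fun μ : Measure α => μ A) hs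
    simpa using this
  constructor
  · rw [Measure.le_iff]
    intro A hA
    have e1 : P A ≤ P (A ∩ Sᶜ) := by
      calc P A ≤ P (A ∩ Sᶜ ∪ S) := measure_mono (fun x hx => by
              by_cases hxS : x ∈ S
              · exact Or.inr hxS
              · exact Or.inl ⟨hx, hxS⟩)
        _ ≤ P (A ∩ Sᶜ) + P S := measure_union_le _ _
        _ = _ := by rw [h1, add_zero]
    have e2 : N (A ∩ Sᶜ) = 0 := measure_mono_null Set.inter_subset_right h2
    have := key (A ∩ Sᶜ)
    rw [e2, add_zero] at this
    calc P A ≤ P (A ∩ Sᶜ) := e1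
      _ ≤ p (A ∩ Sᶜ) := by rw [← this]; exact le_self_add
      _ ≤ p A := measure_mono Set.inter_subset_left
  · rw [Measure.le_iff]
    intro A hA
    have e1 : N A ≤ N (A ∩ S) := by
      calc N A ≤ N (A ∩ S ∪ Sᶜ) := measure_mono (fun x hx => by
              by_cases hxS : x ∈ S
              · exact Or.inl ⟨hx, hxS⟩
              · exact Or.inr hxS)
        _ ≤ N (A ∩ S) + N Sᶜ := measure_union_le _ _
        _ = _ := by rw [h2, add_zero]
    have e2 : P (A ∩ S) = 0 := measure_mono_null Set.inter_subset_right h1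
    have := key (A ∩ S)
    rw [e2, zero_add] at this
    calc N A ≤ N (A ∩ S) := e1
      _ ≤ n (A ∩ S) := by rw [this]; exact le_add_self
      _ ≤ n A := measure_mono Set.inter_subset_left

/-- the complex measure `(p - n) + i (q - r)` -/
def mkC {d : ℕ} (p n q r : Measure (Vd d)) [IsFiniteMeasure p] [IsFiniteMeasure n]
    [IsFiniteMeasure q] [IsFiniteMeasure r] : ComplexMeasure (Vd d) :=
  (p.toSignedMeasure - n.toSignedMeasure).toComplexMeasure
    (q.toSignedMeasure - r.toSignedMeasure)

theorem jd_int {α : Type*} [MeasurableSpace α] (s : SignedMeasure α) (p n : Measure α)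
    [IsFiniteMeasure p] [IsFiniteMeasure n]
    (h : s = p.toSignedMeasure - n.toSignedMeasure) (f : α → ℂ)
    (hp : Integrable f p) (hn : Integrable f n) :
    (∫ x, f x ∂s.toJordanDecomposition.posPart) - (∫ x, f x ∂s.toJordanDecomposition.negPart)
     = (∫ x, f x ∂p) - ∫ x, f x ∂n := by
  obtain ⟨h1, h2⟩ := jd_le s p n h
  have hs := jd_sum s p n h
  have := congrArg (fun μ : Measure α => ∫ x, f x ∂μ) hs
  rw [integral_add_measure (hp.mono_measure h1) hn,
    integral_add_measure hp (hn.mono_measure h2)] at this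
  rw [sub_eq_sub_iff_add_eq_add, this]

section
variable {d : ℕ} (p n q r : Measure (Vd d)) [IsFiniteMeasure p] [IsFiniteMeasure n]
    [IsFiniteMeasure q] [IsFiniteMeasure r]

theorem cint_mkC (f : Vd d → ℂ) (hp : Integrable f p) (hn : Integrable f n)
    (hq : Integrable f q) (hr : Integrable f r) :
    cint (mkC p n q r) f = ((∫ x, f x ∂p) - ∫ x, f x ∂n) +
      Complex.I * ((∫ x, f x ∂q) - ∫ x, f x ∂r) := by
  unfold cint
  rw [jd_int (mkC p n q r).re p n rfl f hp hn, jd_int (mkC p n q r).im q r rfl f hq hr]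

theorem ctv_mkC_le : ctv (mkC p n q r) ≤ p + n + (q + r) := by
  obtain ⟨h1, h2⟩ := jd_le (mkC p n q r).re p n rfl
  obtain ⟨h3, h4⟩ := jd_le (mkC p n q r).im q r rfl
  exact add_le_add (add_le_add h1 h2) (add_le_add h3 h4)

end

/-- the character -/
def chr {d : ℕ} (ξ : Vd d) (x : Vd d) : ℂ :=
  Complex.exp (-(Complex.I) * ((∑ i, x i * ξ i : ℝ) : ℂ))

theorem chr_cont {d : ℕ} (ξ : Vd d) : Continuous (chr ξ) := by
  unfold chr; fun_prop

theorem chr_norm {d : ℕ} (ξ x : Vd d) : ‖chr ξ x‖ = 1 := by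
  unfold chr
  rw [Complex.norm_exp]; simp

theorem chr_int {d : ℕ} (ξ : Vd d) (p : Measure (Vd d)) [IsFiniteMeasure p] :
    Integrable (chr ξ) p :=
  Integrable.of_bound (chr_cont ξ).aestronglyMeasurable 1
    (Filter.Eventually.of_forall fun x => (chr_norm ξ x).le)

theorem chr_charFun {d : ℕ} (ξ : Vd d) (p : Measure (Vd d)) :
    charFun p ξ = ∫ x, chr (-ξ) x ∂p := by
  rw [charFun_apply]
  congr 1; ext x
  unfold chr
  congr 1
  simp [PiLp.inner_apply]
  rw [mul_comm]
  congr 1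
  exact Finset.sum_congr rfl fun i _ => mul_comm _ _

theorem chr_conj {d : ℕ} (ξ : Vd d) (p : Measure (Vd d)) :
    (starRingEnd ℂ) (∫ x, chr ξ x ∂p) = ∫ x, chr (-ξ) x ∂p := by
  rw [← integral_conj]
  congr 1; ext x
  unfold chr
  rw [← Complex.exp_conj]
  congr 1
  simp [Complex.conj_ofReal]

theorem ftc_eq {d : ℕ} (μ : ComplexMeasure (Vd d)) (ξ : Vd d) : ftc μ ξ = cint μ (chr ξ) := rfl

theorem signed_ext {d : ℕ} (s t : SignedMeasure (Vd d))
    (h : ∀ ξ, (∫ x, chr ξ x ∂s.toJordanDecomposition.posPart)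
      - (∫ x, chr ξ x ∂s.toJordanDecomposition.negPart) =
       (∫ x, chr ξ x ∂t.toJordanDecomposition.posPart)
      - (∫ x, chr ξ x ∂t.toJordanDecomposition.negPart)) : s = t := by
  rw [← s.toSignedMeasure_toJordanDecomposition, ← t.toSignedMeasure_toJordanDecomposition,
    JordanDecomposition.toSignedMeasure, JordanDecomposition.toSignedMeasure,
    sub_eq_sub_iff_add_eq_add, ← Measure.toSignedMeasure_add, ← Measure.toSignedMeasure_add,
    Measure.toSignedMeasure_eq_toSignedMeasure_iff]
  apply Measure.ext_of_charFun
  ext ξ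
  rw [chr_charFun, chr_charFun, integral_add_measure (chr_int _ _) (chr_int _ _),
    integral_add_measure (chr_int _ _) (chr_int _ _), ← sub_eq_sub_iff_add_eq_add]
  exact h (-ξ)

theorem ftc_inj {d : ℕ} (μ ν : ComplexMeasure (Vd d)) (h : ∀ ξ, ftc μ ξ = ftc ν ξ) : μ = ν := by
  have h2 : ∀ ξ, (starRingEnd ℂ) (ftc μ (-ξ)) = (starRingEnd ℂ) (ftc ν (-ξ)) :=
    fun ξ => by rw [h]
  have hre : μ.re = ν.re := by
    apply signed_ext
    intro ξ
    have a := h ξ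
    have b := h2 ξ
    simp only [ftc_eq, cint, map_add, map_sub, map_mul, Complex.conj_I, chr_conj, neg_neg] at a b
    linear_combination (a + b) / 2
  have him : μ.im = ν.im := by
    apply signed_ext
    intro ξ
    have a := h ξ
    have b := h2 ξ
    simp only [ftc_eq, cint, map_add, map_sub, map_mul, Complex.conj_I, chr_conj, neg_neg] at a b
    have : Complex.I * Complex.I = -1 := Complex.I_mul_I
    apply mul_left_cancel₀ Complex.I_ne_zero
    linear_combination (a - b) / 2
  rw [← μ.toComplexMeasure_to_signedMeasure, ← ν.toComplexMeasure_to_signedMeasure, hre, him]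

theorem dm_comm' {d : ℕ} (m : ℕ) (μ ν : ComplexMeasure (Vd d)) : dm m μ ν = dm m ν μ := by
  unfold dm
  simp_rw [norm_sub_rev]

theorem dm_tri {d : ℕ} (m : ℕ) (μ ν ρ : ComplexMeasure (Vd d)) :
    dm m μ ρ ≤ dm m μ ν + dm m ν ρ := by
  unfold dm
  refine iSup_le fun ξ => ?_
  refine le_trans ?_ (add_le_add (le_iSup _ ξ) (le_iSup _ ξ))
  rw [← ENNReal.ofReal_add (by positivity) (by positivity), ← add_div]
  apply ENNReal.ofReal_le_ofReal
  gcongr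
  exact norm_sub_le_norm_sub_add_norm_sub _ _ _

theorem ftc_le_of_dm {d : ℕ} (m : ℕ) (μ ν : ComplexMeasure (Vd d)) (ξ : Vd d) (hξ : ξ ≠ 0) :
    ENNReal.ofReal ‖ftc μ ξ - ftc ν ξ‖ ≤ ENNReal.ofReal (‖ξ‖ ^ m) * dm m μ ν := by
  have hp : 0 < ‖ξ‖ ^ m := by positivity
  have : ENNReal.ofReal (‖ftc μ ξ - ftc ν ξ‖ / ‖ξ‖ ^ m) ≤ dm m μ ν :=
    le_iSup (fun ξ : {ξ : Vd d // ξ ≠ 0} =>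
      ENNReal.ofReal (‖ftc μ ξ - ftc ν ξ‖ / ‖(ξ : Vd d)‖ ^ m)) ⟨ξ, hξ⟩
  calc ENNReal.ofReal ‖ftc μ ξ - ftc ν ξ‖
      = ENNReal.ofReal (‖ξ‖ ^ m * (‖ftc μ ξ - ftc ν ξ‖ / ‖ξ‖ ^ m)) := by
        rw [mul_div_cancel₀ _ hp.ne']
    _ = ENNReal.ofReal (‖ξ‖ ^ m) * ENNReal.ofReal (‖ftc μ ξ - ftc ν ξ‖ / ‖ξ‖ ^ m) := by
        rw [ENNReal.ofReal_mul hp.le]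
    _ ≤ _ := by gcongr

theorem dm_le {d : ℕ} (m : ℕ) (μ ν : ComplexMeasure (Vd d)) (C : ℝ)
    (h : ∀ ξ : Vd d, ξ ≠ 0 → ‖ftc μ ξ - ftc ν ξ‖ ≤ C * ‖ξ‖ ^ m) :
    dm m μ ν ≤ ENNReal.ofReal C := by
  refine iSup_le fun ξ => ENNReal.ofReal_le_ofReal ?_
  have hp : 0 < ‖(ξ : Vd d)‖ ^ m := by have := ξ.2; positivity
  rw [div_le_iff₀ hp]
  exact h ξ ξ.2

theorem chr_zero {d : ℕ} : (chr (0 : Vd d)) = fun x : Vd d => ∏ i, ((x i : ℂ)) ^ ((0 : Fin d → ℕ) i) := by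
  ext x; simp [chr]

theorem ftc_zero {d m : ℕ} {M : (Fin d → ℕ) → ℂ} {μ : ComplexMeasure (Vd d)}
    (h : μ ∈ MomentSet d m M) : ftc μ 0 = M 0 := by
  rw [ftc_eq, chr_zero]
  exact h.2 0 (by simp)

instance ctv_fin {d : ℕ} (μ : ComplexMeasure (Vd d)) : IsFiniteMeasure (ctv μ) := by
  unfold ctv; infer_instance

theorem int_pow_of_lint {d m : ℕ} (p : Measure (Vd d))
    (h : (∫⁻ x, (‖x‖₊ : ℝ≥0∞) ^ m ∂p) < ⊤) : Integrable (fun x : Vd d => ‖x‖ ^ m) p := by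
  refine ⟨by fun_prop, ?_⟩
  rw [hasFiniteIntegral_iff_enorm]
  convert h using 3 with x
  rw [enorm_pow, enorm_norm]; rfl

theorem int_pow_le {d m k : ℕ} (hk : k ≤ m) (p : Measure (Vd d)) [IsFiniteMeasure p]
    (h : Integrable (fun x : Vd d => ‖x‖ ^ m) p) : Integrable (fun x : Vd d => ‖x‖ ^ k) p := by
  refine Integrable.mono' ((integrable_const (1 : ℝ)).add h) (by fun_prop)
    (Filter.Eventually.of_forall fun x => ?_)
  rw [norm_pow, norm_norm]
  simp only [Pi.add_apply]
  rcases le_total ‖x‖ 1 with h1 | h1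
  · have := pow_le_one₀ (n := k) (norm_nonneg x) h1
    have := pow_nonneg (norm_nonneg x) m
    linarith
  · have := pow_le_pow_right₀ h1 hk
    linarith

theorem int_mono {d m : ℕ} (p : Measure (Vd d)) [IsFiniteMeasure p]
    (h : Integrable (fun x : Vd d => ‖x‖ ^ m) p) (β : Fin d → ℕ) (hβ : ∑ i, β i ≤ m) :
    Integrable (fun x : Vd d => ∏ i, ((x i : ℂ)) ^ (β i)) p := by
  refine Integrable.mono' (int_pow_le hβ p h) (by fun_prop)
    (Filter.Eventually.of_forall fun x => ?_)
  rw [norm_prod, ← Finset.prod_pow_eq_pow_sum]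
  refine Finset.prod_le_prod (fun i _ => norm_nonneg _) fun i _ => ?_
  rw [norm_pow]
  gcongr
  rw [Complex.norm_real]
  exact PiLp.norm_apply_le x i

theorem int_parts {d : ℕ} {μ : ComplexMeasure (Vd d)} {f : Vd d → ℂ} (hf : Integrable f (ctv μ)) :
    (Integrable f μ.re.toJordanDecomposition.posPart ∧
      Integrable f μ.re.toJordanDecomposition.negPart) ∧
    (Integrable f μ.im.toJordanDecomposition.posPart ∧
      Integrable f μ.im.toJordanDecomposition.negPart) := by
  unfold ctv SignedMeasure.totalVariation at hf
  simpa [integrable_add_measure] using hf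

theorem cint_add {d : ℕ} {μ : ComplexMeasure (Vd d)} {f g : Vd d → ℂ}
    (hf : Integrable f (ctv μ)) (hg : Integrable g (ctv μ)) :
    cint μ (fun x => f x + g x) = cint μ f + cint μ g := by
  obtain ⟨⟨a, b⟩, c, e⟩ := int_parts hf
  obtain ⟨⟨a2, b2⟩, c2, e2⟩ := int_parts hg
  unfold cint
  rw [integral_add a a2, integral_add b b2, integral_add c c2, integral_add e e2]
  ring

theorem cint_smul {d : ℕ} {μ : ComplexMeasure (Vd d)} {f : Vd d → ℂ} (c : ℂ) :
    cint μ (fun x => c * f x) = c * cint μ f := by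
  unfold cint
  simp only [integral_const_mul]
  ring

theorem cint_sum {d : ℕ} {μ : ComplexMeasure (Vd d)} {ι : Type*} (s : Finset ι)
    (f : ι → Vd d → ℂ) (hf : ∀ i ∈ s, Integrable (f i) (ctv μ)) :
    cint μ (fun x => ∑ i ∈ s, f i x) = ∑ i ∈ s, cint μ (f i) := by
  unfold cint
  rw [integral_finsetSum _ fun i hi => (int_parts (hf i hi)).1.1,
    integral_finsetSum _ fun i hi => (int_parts (hf i hi)).1.2,
    integral_finsetSum _ fun i hi => (int_parts (hf i hi)).2.1,
    integral_finsetSum _ fun i hi => (int_parts (hf i hi)).2.2,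
    Finset.sum_add_distrib, ← Finset.mul_sum, Finset.sum_sub_distrib, Finset.sum_sub_distrib]

theorem cint_bound {d : ℕ} {μ : ComplexMeasure (Vd d)} {f : Vd d → ℂ}
    (hf : Integrable f (ctv μ)) : ‖cint μ f‖ ≤ ∫ x, ‖f x‖ ∂(ctv μ) := by
  obtain ⟨⟨a, b⟩, c, e⟩ := int_parts hf
  unfold ctv SignedMeasure.totalVariation
  rw [integral_add_measure (a.norm.add_measure b.norm) (c.norm.add_measure e.norm),
    integral_add_measure a.norm b.norm, integral_add_measure c.norm e.norm]
  unfold cint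
  refine (norm_add_le _ _).trans (add_le_add ?_ ?_)
  · exact (norm_sub_le _ _).trans (add_le_add (norm_integral_le_integral_norm _)
      (norm_integral_le_integral_norm _))
  · rw [norm_mul, Complex.norm_I, one_mul]
    exact (norm_sub_le _ _).trans (add_le_add (norm_integral_le_integral_norm _)
      (norm_integral_le_integral_norm _))

theorem taylor_bound (m : ℕ) (hm : 0 < m) : ∃ C : ℝ, 0 ≤ C ∧ ∀ t : ℝ,
    ‖Complex.exp (-Complex.I * t) - ∑ k ∈ Finset.range m, (-Complex.I * t) ^ k / (k.factorial : ℂ)‖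
      ≤ C * |t| ^ m := by
  have hnorm : ∀ t : ℝ, ‖-Complex.I * (t : ℂ)‖ = |t| := fun t => by
    rw [norm_mul, norm_neg, Complex.norm_I, one_mul, Complex.norm_real, Real.norm_eq_abs]
  set C1 : ℝ := ((m.succ : ℝ) * ((m.factorial : ℝ) * m)⁻¹) with hC1
  have hC1' : 0 ≤ C1 := by positivity
  refine ⟨C1 + (1 + m), by positivity, fun t => ?_⟩
  rcases le_total |t| 1 with h | h
  · have := Complex.exp_bound (x := -Complex.I * t) (by rw [hnorm]; exact h) hm
    rw [hnorm] at this
    refine this.trans ?_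
    rw [mul_comm]
    have : 0 ≤ |t| ^ m := by positivity
    gcongr
    linarith [Nat.cast_nonneg (α := ℝ) m]
  · have h1 : ‖Complex.exp (-Complex.I * t)‖ = 1 := by
      rw [Complex.norm_exp]; simp
    have h2 : ‖∑ k ∈ Finset.range m, (-Complex.I * (t : ℂ)) ^ k / (k.factorial : ℂ)‖ ≤ m * |t| ^ m := by
      refine (norm_sum_le _ _).trans ?_
      calc _ ≤ ∑ k ∈ Finset.range m, |t| ^ m := by
            refine Finset.sum_le_sum fun k hk => ?_
            rw [norm_div, norm_pow, hnorm]
            have hk' := (Finset.mem_range.1 hk).le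
            refine (div_le_self (by positivity) ?_).trans (pow_le_pow_right₀ h hk')
            rw [Complex.norm_natCast]
            exact_mod_cast k.factorial_pos
        _ = _ := by simp
    have h3 : 1 ≤ |t| ^ m := one_le_pow₀ h
    refine (norm_sub_le _ _).trans ?_
    rw [h1]
    have : 0 ≤ C1 * |t| ^ m := by positivity
    linarith

theorem cint_poly {d m : ℕ} {M : (Fin d → ℕ) → ℂ} {ν : ComplexMeasure (Vd d)}
    (h : ν ∈ MomentSet d m M) (ξ : Vd d) (k : ℕ) (hk : k ≤ m) :
    Integrable (fun x : Vd d => (-Complex.I * ((∑ i, x i * ξ i : ℝ) : ℂ)) ^ k / (k.factorial : ℂ))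
      (ctv ν) ∧
    cint ν (fun x => (-Complex.I * ((∑ i, x i * ξ i : ℝ) : ℂ)) ^ k / (k.factorial : ℂ)) =
      ∑ β ∈ Finset.piAntidiag Finset.univ k, ((-Complex.I) ^ k / (k.factorial : ℂ) *
        (Nat.multinomial Finset.univ β : ℂ) * ∏ i, (ξ i : ℂ) ^ β i) * M β := by
  have e : (fun x : Vd d => (-Complex.I * ((∑ i, x i * ξ i : ℝ) : ℂ)) ^ k / (k.factorial : ℂ)) =
      fun x => ∑ β ∈ Finset.piAntidiag Finset.univ k, ((-Complex.I) ^ k / (k.factorial : ℂ) *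
        (Nat.multinomial Finset.univ β : ℂ) * ∏ i, (ξ i : ℂ) ^ β i) *
          ∏ i, ((x i : ℂ)) ^ (β i) := by
    ext x
    push_cast
    rw [mul_pow, Finset.sum_pow_eq_sum_piAntidiag, Finset.mul_sum, Finset.sum_div]
    refine Finset.sum_congr rfl fun β _ => ?_
    simp only [mul_pow, Finset.prod_mul_distrib]
    ring
  have hi : ∀ β ∈ Finset.piAntidiag Finset.univ k, Integrable (fun x : Vd d =>
      ((-Complex.I) ^ k / (k.factorial : ℂ) *
        (Nat.multinomial Finset.univ β : ℂ) * ∏ i, (ξ i : ℂ) ^ β i) *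
          ∏ i, ((x i : ℂ)) ^ (β i)) (ctv ν) := fun β hβ => by
    refine Integrable.const_mul (int_mono _ (int_pow_of_lint _ h.1) β ?_) _
    rw [Finset.mem_piAntidiag] at hβ
    rw [hβ.1]; exact hk
  rw [e]
  refine ⟨integrable_finsetSum _ hi, ?_⟩
  rw [cint_sum _ _ hi]
  refine Finset.sum_congr rfl fun β hβ => ?_
  rw [cint_smul, h.2 β]
  rw [Finset.mem_piAntidiag] at hβ
  rw [hβ.1]; exact hk

theorem dm_fin {d m : ℕ} (hm : 0 < m) {M : (Fin d → ℕ) → ℂ} {ν₁ ν₂ : ComplexMeasure (Vd d)}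
    (h₁ : ν₁ ∈ MomentSet d m M) (h₂ : ν₂ ∈ MomentSet d m M) : dm m ν₁ ν₂ < ⊤ := by
  obtain ⟨C, hC, hT⟩ := taylor_bound m hm
  have key : ∀ ξ : Vd d, ∃ T : ℂ, ∀ ν ∈ MomentSet d m M,
      ‖ftc ν ξ - T‖ ≤ (C * ∫ x, ‖x‖ ^ m ∂(ctv ν)) * ‖ξ‖ ^ m := by
    intro ξ
    refine ⟨∑ k ∈ Finset.range m, ∑ β ∈ Finset.piAntidiag Finset.univ k,
      ((-Complex.I) ^ k / (k.factorial : ℂ) *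
        (Nat.multinomial Finset.univ β : ℂ) * ∏ i, (ξ i : ℂ) ^ β i) * M β, fun ν hν => ?_⟩
    set S : Vd d → ℂ := fun x => ∑ k ∈ Finset.range m,
      (-Complex.I * ((∑ i, x i * ξ i : ℝ) : ℂ)) ^ k / (k.factorial : ℂ) with hS
    have hSi : Integrable S (ctv ν) := integrable_finsetSum _ fun k hk =>
      (cint_poly hν ξ k (Finset.mem_range.1 hk).le).1
    have hSc : cint ν S = ∑ k ∈ Finset.range m, ∑ β ∈ Finset.piAntidiag Finset.univ k,
      ((-Complex.I) ^ k / (k.factorial : ℂ) *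
        (Nat.multinomial Finset.univ β : ℂ) * ∏ i, (ξ i : ℂ) ^ β i) * M β := by
      rw [hS, cint_sum _ _ fun k hk => (cint_poly hν ξ k (Finset.mem_range.1 hk).le).1]
      exact Finset.sum_congr rfl fun k hk => (cint_poly hν ξ k (Finset.mem_range.1 hk).le).2
    have hRi : Integrable (fun x => chr ξ x - S x) (ctv ν) := (chr_int ξ _).sub hSi
    have hsplit : ftc ν ξ = cint ν S + cint ν (fun x => chr ξ x - S x) := by
      rw [← cint_add hSi hRi, ftc_eq]
      congr 1; ext x; ring
    rw [← hSc, hsplit, add_sub_cancel_left]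
    refine (cint_bound hRi).trans ?_
    have hb : ∀ x : Vd d, ‖chr ξ x - S x‖ ≤ C * ‖ξ‖ ^ m * ‖x‖ ^ m := fun x => by
      refine (hT (∑ i, x i * ξ i)).trans ?_
      have : |∑ i, x i * ξ i| ≤ ‖ξ‖ * ‖x‖ := by
        have := abs_real_inner_le_norm ξ x
        simpa [PiLp.inner_apply] using this
      calc C * |∑ i, x i * ξ i| ^ m ≤ C * (‖ξ‖ * ‖x‖) ^ m := by gcongr
        _ = _ := by rw [mul_pow]; ring
    calc _ ≤ ∫ x, C * ‖ξ‖ ^ m * ‖x‖ ^ m ∂(ctv ν) :=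
          integral_mono hRi.norm ((int_pow_of_lint _ hν.1).const_mul _) hb
      _ = _ := by rw [integral_const_mul]; ring
  refine (dm_le m ν₁ ν₂ (C * (∫ x, ‖x‖ ^ m ∂(ctv ν₁)) + C * ∫ x, ‖x‖ ^ m ∂(ctv ν₂))
    fun ξ _ => ?_).trans_lt ENNReal.ofReal_lt_top
  obtain ⟨T, hT⟩ := key ξ
  have a := hT ν₁ h₁
  have b := hT ν₂ h₂
  rw [norm_sub_rev] at b
  rw [add_mul]
  exact (norm_sub_le_norm_sub_add_norm_sub _ T _).trans (add_le_add a b)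

theorem dm_zero_iff {d m : ℕ} {M : (Fin d → ℕ) → ℂ} {ν₁ ν₂ : ComplexMeasure (Vd d)}
    (h₁ : ν₁ ∈ MomentSet d m M) (h₂ : ν₂ ∈ MomentSet d m M) : dm m ν₁ ν₂ = 0 ↔ ν₁ = ν₂ := by
  constructor
  · intro h
    apply ftc_inj
    intro ξ
    by_cases hξ : ξ = 0
    · rw [hξ, ftc_zero h₁, ftc_zero h₂]
    · have := ftc_le_of_dm m ν₁ ν₂ ξ hξ
      rw [h, mul_zero, nonpos_iff_eq_zero, ENNReal.ofReal_eq_zero] at this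
      exact sub_eq_zero.1 (norm_le_zero_iff.1 this)
  · rintro rfl
    simp [dm]

/-- finitely supported measures -/
def disc {d : ℕ} {ι : Type*} (s : Finset ι) (w : ι → ℝ) (x : ι → Vd d) : Measure (Vd d) :=
  ∑ i ∈ s, ENNReal.ofReal (w i) • Measure.dirac (x i)

instance disc_fin {d : ℕ} {ι : Type*} (s : Finset ι) (w : ι → ℝ) (x : ι → Vd d) :
    IsFiniteMeasure (disc s w x) := by
  refine ⟨?_⟩
  unfold disc
  simp [Measure.finsetSum_apply]

theorem disc_int {d : ℕ} {ι : Type*} (s : Finset ι) (w : ι → ℝ) (x : ι → Vd d)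
    {F : Type*} [NormedAddCommGroup F] (f : Vd d → F) : Integrable f (disc s w x) := by
  unfold disc
  rw [integrable_finsetSum_measure]
  intro i _
  exact (integrable_dirac (by simp)).smul_measure ENNReal.ofReal_ne_top

theorem disc_integral {d : ℕ} {ι : Type*} (s : Finset ι) (w : ι → ℝ) (x : ι → Vd d)
    (f : Vd d → ℂ) : (∫ y, f y ∂(disc s w x)) = ∑ i ∈ s, ((max (w i) 0 : ℝ) : ℂ) * f (x i) := by
  unfold disc
  rw [integral_finsetSum_measure
    fun i _ => (integrable_dirac (by simp)).smul_measure ENNReal.ofReal_ne_top]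
  refine Finset.sum_congr rfl fun i _ => ?_
  rw [integral_smul_measure, integral_dirac, ENNReal.toReal_ofReal']
  simp

theorem disc_sub {d : ℕ} {ι : Type*} (s : Finset ι) (w : ι → ℝ) (x : ι → Vd d)
    (f : Vd d → ℂ) : (∫ y, f y ∂(disc s w x)) - (∫ y, f y ∂(disc s (fun i => -w i) x))
      = ∑ i ∈ s, (w i : ℂ) * f (x i) := by
  rw [disc_integral, disc_integral, ← Finset.sum_sub_distrib]
  refine Finset.sum_congr rfl fun i _ => ?_
  rw [← sub_mul, ← Complex.ofReal_sub]
  congr 2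
  rcases le_total (w i) 0 with h | h
  · rw [max_eq_right h, max_eq_left (by linarith)]; ring
  · rw [max_eq_left h, max_eq_right (by linarith)]; ring

theorem exists_weights (d m : ℕ) (M : (Fin d → ℕ) → ℂ) :
    ∃ w : (Fin d → Fin (m + 1)) → ℂ, ∀ β : Fin d → ℕ, (∀ i, β i ≤ m) →
      ∑ g, w g * ∏ i, ((g i : ℕ) : ℂ) ^ β i = M β := by
  set V : Matrix (Fin (m + 1)) (Fin (m + 1)) ℂ :=
    Matrix.vandermonde (fun i : Fin (m + 1) => ((i : ℕ) : ℂ)) with hV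
  have hdet : IsUnit V.det := by
    rw [isUnit_iff_ne_zero, hV, Matrix.det_vandermonde_ne_zero_iff]
    intro a b hab
    simpa [Fin.ext_iff] using hab
  have hinv : V⁻¹ * V = 1 := Matrix.nonsing_inv_mul V hdet
  refine ⟨fun g => ∑ b : Fin d → Fin (m + 1), M (fun i => (b i : ℕ)) * ∏ i, V⁻¹ (b i) (g i),
    fun β hβ => ?_⟩
  have hone : ∀ b c : Fin (m + 1), ∑ g, V⁻¹ b g * ((g : ℕ) : ℂ) ^ (c : ℕ) = if b = c then 1 else 0 := by
    intro b c
    have := congrFun (congrFun hinv b) c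
    rw [Matrix.mul_apply, Matrix.one_apply] at this
    rw [← this]
    rfl
  set β' : Fin d → Fin (m + 1) := fun i => ⟨β i, Nat.lt_succ_of_le (hβ i)⟩ with hβ'
  calc _ = ∑ g : Fin d → Fin (m + 1), ∑ b : Fin d → Fin (m + 1),
        M (fun i => (b i : ℕ)) * ∏ i, (V⁻¹ (b i) (g i) * ((g i : ℕ) : ℂ) ^ (β' i : ℕ)) := by
        refine Finset.sum_congr rfl fun g _ => ?_
        rw [Finset.sum_mul]
        refine Finset.sum_congr rfl fun b _ => ?_
        rw [Finset.prod_mul_distrib, mul_assoc]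
    _ = ∑ b : Fin d → Fin (m + 1), M (fun i => (b i : ℕ)) *
        ∏ i, ∑ g : Fin (m + 1), (V⁻¹ (b i) g * ((g : ℕ) : ℂ) ^ (β' i : ℕ)) := by
        rw [Finset.sum_comm]
        refine Finset.sum_congr rfl fun b _ => ?_
        rw [← Finset.mul_sum, Finset.prod_univ_sum, Fintype.piFinset_univ]
    _ = ∑ b : Fin d → Fin (m + 1), if b = β' then M (fun i => (b i : ℕ)) else 0 := by
        refine Finset.sum_congr rfl fun b _ => ?_
        simp_rw [hone]
        rw [Finset.prod_ite_zero]
        simp [funext_iff]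
    _ = M β := by simp [hβ']

theorem alt_sum (m b : ℕ) (hb : b ≤ m) :
    ∑ i ∈ Finset.range (m + 2), ((-1 : ℂ) ^ (i + 1) * ((m + 1).choose i : ℂ)) * (i : ℂ) ^ b = 0 := by
  have h := congrFun (fwdDiff_iter_pow_eq_zero_of_lt (R := ℂ) (Nat.lt_succ_of_le hb)) 0
  rw [fwdDiff_iter_eq_sum_shift] at h
  simp only [Nat.succ_eq_add_one, zero_add, nsmul_eq_mul, mul_one, zsmul_eq_mul, Pi.zero_apply] at h
  have h2 : ∑ i ∈ Finset.range (m + 2), ((-1 : ℂ) ^ (i + 1) * ((m + 1).choose i : ℂ)) * (i : ℂ) ^ b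
    = (-1 : ℂ) ^ (m + 2) * ∑ x ∈ Finset.range (m + 1 + 1), (((-1 : ℤ) ^ (m + 1 - x) * ((m + 1).choose x : ℤ) : ℤ) : ℂ) * (x : ℂ) ^ b := by
    rw [Finset.mul_sum]
    refine Finset.sum_congr rfl fun i hi => ?_
    have hi' : i ≤ m + 1 := by have := Finset.mem_range.1 hi; omega
    push_cast
    rw [← mul_assoc, ← mul_assoc, ← pow_add]
    congr 2
    have : m + 2 + (m + 1 - i) = (i + 1) + 2 * (m + 1 - i) := by omega
    rw [this, pow_add _ (i + 1), pow_mul]; simp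
  rw [h2, h, mul_zero]

/-- scalar prefactors -/
def ak (m k : ℕ) : ℝ := ((k : ℝ) + 1)⁻¹ * (((3 : ℝ) ^ k) ^ m)⁻¹

theorem ak_pos (m k : ℕ) : 0 < ak m k := by unfold ak; positivity

/-- the weights -/
def Wt (m k i : ℕ) : ℝ := ak m k * ((-1) ^ (i + 1) * ((m + 1).choose i : ℝ))

/-- the nodes -/
def Xn {d : ℕ} (i0 : Fin d) (k i : ℕ) : Vd d := EuclideanSpace.single i0 ((i : ℝ) * 3 ^ k)

theorem block_moment {d m : ℕ} (i0 : Fin d) (k : ℕ) (β : Fin d → ℕ) (hβ : ∑ i, β i ≤ m) :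
    ∑ i ∈ Finset.range (m + 2), (Wt m k i : ℂ) * ∏ l, ((Xn i0 k i l : ℝ) : ℂ) ^ β l = 0 := by
  have hb : β i0 ≤ m := (Finset.single_le_sum (fun i _ => Nat.zero_le _) (Finset.mem_univ i0)).trans hβ
  have e : ∀ i : ℕ, ∏ l, ((Xn i0 k i l : ℝ) : ℂ) ^ β l =
      ((i : ℂ) * 3 ^ k) ^ β i0 * ∏ l ∈ Finset.univ.erase i0, (0 : ℂ) ^ β l := by
    intro i
    rw [← Finset.mul_prod_erase _ _ (Finset.mem_univ i0)]
    congr 1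
    · simp [Xn]
    · refine Finset.prod_congr rfl fun l hl => ?_
      have : l ≠ i0 := Finset.ne_of_mem_erase hl
      simp [Xn, this]
  simp_rw [e]
  have := alt_sum m (β i0) hb
  calc _ = ((ak m k : ℂ) * (3 ^ k) ^ β i0 * ∏ l ∈ Finset.univ.erase i0, (0 : ℂ) ^ β l) *
      ∑ i ∈ Finset.range (m + 2), ((-1 : ℂ) ^ (i + 1) * ((m + 1).choose i : ℂ)) * (i : ℂ) ^ β i0 := by
        rw [Finset.mul_sum]
        refine Finset.sum_congr rfl fun i _ => ?_
        unfold Wt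
        push_cast
        ring
    _ = 0 := by rw [this, mul_zero]

theorem block_chr {d m : ℕ} (i0 : Fin d) (k : ℕ) (ξ : Vd d) :
    ∑ i ∈ Finset.range (m + 2), (Wt m k i : ℂ) * chr ξ (Xn i0 k i) =
      -(ak m k : ℂ) * (1 - Complex.exp (Complex.I * ((-(3 ^ k * ξ i0) : ℝ) : ℂ))) ^ (m + 1) := by
  set z := Complex.exp (Complex.I * ((-(3 ^ k * ξ i0) : ℝ) : ℂ)) with hz
  have e : ∀ i : ℕ, chr ξ (Xn i0 k i) = z ^ i := by
    intro i
    rw [hz, ← Complex.exp_nat_mul]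
    unfold chr
    congr 1
    have : ∑ l, Xn i0 k i l * ξ l = (i : ℝ) * 3 ^ k * ξ i0 := by
      rw [Finset.sum_eq_single i0]
      · simp [Xn]
      · intro l _ hl; simp [Xn, hl]
      · simp
    rw [this]
    push_cast; ring
  simp_rw [e]
  have : (1 - z) ^ (m + 1) = ((-z) + 1) ^ (m + 1) := by ring
  rw [this, add_pow, Finset.mul_sum]
  refine Finset.sum_congr rfl fun i _ => ?_
  unfold Wt
  push_cast
  rw [neg_pow z i, one_pow]
  ring

theorem tele (K : ℕ) (t : ℝ) (ht : 0 < t) :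
    ∑ k ∈ Finset.range K, min (3 ^ k * t) (3 ^ k * t)⁻¹ ≤ 6 := by
  have step : ∀ u : ℝ, 0 < u → min u u⁻¹ ≤ 6 * (3 * u / (1 + 3 * u) - u / (1 + u)) := by
    intro u hu
    have e : 6 * (3 * u / (1 + 3 * u) - u / (1 + u)) = 12 * u / ((1 + 3 * u) * (1 + u)) := by
      field_simp; ring
    rw [e, le_div_iff₀ (by positivity)]
    rcases le_total u 1 with h | h
    · calc min u u⁻¹ * ((1 + 3 * u) * (1 + u)) ≤ u * ((1 + 3 * u) * (1 + u)) := by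
            gcongr; exact min_le_left _ _
        _ ≤ u * (4 * 2) := by gcongr <;> linarith
        _ ≤ _ := by linarith
    · calc min u u⁻¹ * ((1 + 3 * u) * (1 + u)) ≤ u⁻¹ * ((1 + 3 * u) * (1 + u)) := by
            gcongr; exact min_le_right _ _
        _ ≤ u⁻¹ * ((4 * u) * (2 * u)) := by gcongr <;> linarith
        _ = 8 * u := by field_simp; ring
        _ ≤ _ := by linarith
  have : ∀ K : ℕ, ∑ k ∈ Finset.range K, min (3 ^ k * t) (3 ^ k * t)⁻¹ ≤
      6 * (3 ^ K * t / (1 + 3 ^ K * t)) - 6 * (t / (1 + t)) := by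
    intro K
    induction K with
    | zero => simp
    | succ K ih =>
      rw [Finset.sum_range_succ]
      have := step (3 ^ K * t) (by positivity)
      have e : (3 : ℝ) ^ (K + 1) * t = 3 * (3 ^ K * t) := by ring
      rw [e]
      linarith
  refine (this K).trans ?_
  have h1 : 3 ^ K * t / (1 + 3 ^ K * t) ≤ 1 := by
    rw [div_le_one (by positivity)]; linarith
  have h2 : 0 ≤ t / (1 + t) := by positivity
  linarith

theorem block_bound {d m : ℕ} (hm : 0 < m) (i0 : Fin d) (k : ℕ) (ξ : Vd d) (hξ : ξ i0 ≠ 0) :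
    ‖∑ i ∈ Finset.range (m + 2), (Wt m k i : ℂ) * chr ξ (Xn i0 k i)‖ ≤
      ((k : ℝ) + 1)⁻¹ * (2 ^ (m + 1) * |ξ i0| ^ m * min (3 ^ k * |ξ i0|) (3 ^ k * |ξ i0|)⁻¹) := by
  rw [block_chr, norm_mul, norm_neg, norm_pow, Complex.norm_real, Real.norm_of_nonneg (ak_pos m k).le]
  set t := |ξ i0| with ht
  have htp : 0 < t := abs_pos.2 hξ
  set y := ‖1 - Complex.exp (Complex.I * ((-(3 ^ k * ξ i0) : ℝ) : ℂ))‖ with hy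
  have hy0 : 0 ≤ y := norm_nonneg _
  have hyu : y ≤ 3 ^ k * t := by
    rw [hy, norm_sub_rev]
    refine (Real.norm_exp_I_mul_ofReal_sub_one_le).trans ?_
    rw [norm_neg, norm_mul, Real.norm_eq_abs, Real.norm_eq_abs, ← ht, abs_of_pos (by positivity)]
  have hy2 : y ≤ 2 := by
    rw [hy]
    refine (norm_sub_le _ _).trans ?_
    rw [Complex.norm_exp_I_mul_ofReal]; norm_num
  unfold ak
  rw [mul_assoc]
  refine mul_le_mul_of_nonneg_left ?_ (by positivity)
  set R : ℝ := 3 ^ k with hR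
  have hRp : 0 < R := by positivity
  rw [inv_mul_le_iff₀ (by positivity)]
  have hgoal : y ^ (m + 1) ≤ 2 ^ (m + 1) * ((R * t) ^ m * min (R * t) (R * t)⁻¹) := by
    have hu : 0 < R * t := by positivity
    set u := R * t
    rcases le_total u 1 with h | h
    · have : min u u⁻¹ = u := min_eq_left (h.trans ((one_le_inv₀ hu).2 h))
      rw [this, ← pow_succ]
      calc y ^ (m + 1) ≤ u ^ (m + 1) := by gcongr
        _ = 1 * u ^ (m + 1) := (one_mul _).symm
        _ ≤ _ := by gcongr; exact one_le_pow₀ (by norm_num)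
    · have : min u u⁻¹ = u⁻¹ := min_eq_right ((inv_le_one_of_one_le₀ h).trans h)
      rw [this]
      obtain ⟨n, rfl⟩ : ∃ n, m = n + 1 := ⟨m - 1, by omega⟩
      have : u ^ (n + 1) * u⁻¹ = u ^ n := by rw [pow_succ, mul_assoc, mul_inv_cancel₀ hu.ne', mul_one]
      rw [this]
      calc y ^ (n + 1 + 1) ≤ 2 ^ (n + 1 + 1) := by gcongr
        _ = 2 ^ (n + 1 + 1) * 1 := (mul_one _).symm
        _ ≤ _ := by gcongr; exact one_le_pow₀ h
  calc _ ≤ _ := hgoal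
    _ = _ := by ring

theorem tail_bound {d m : ℕ} (hm : 0 < m) (i0 : Fin d) (J K : ℕ) (hJ : J ≤ K) (ξ : Vd d) :
    ‖(∑ k ∈ Finset.range K, ∑ i ∈ Finset.range (m + 2), (Wt m k i : ℂ) * chr ξ (Xn i0 k i)) -
      (∑ k ∈ Finset.range J, ∑ i ∈ Finset.range (m + 2), (Wt m k i : ℂ) * chr ξ (Xn i0 k i))‖ ≤
      (6 * 2 ^ (m + 1) * ((J : ℝ) + 1)⁻¹) * ‖ξ‖ ^ m := by
  by_cases hξ : ξ i0 = 0
  · have : ∀ k, ∑ i ∈ Finset.range (m + 2), (Wt m k i : ℂ) * chr ξ (Xn i0 k i) = 0 := by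
      intro k
      rw [block_chr, hξ]; simp
    simp only [this]
    simp; positivity
  rw [← Finset.sum_Ico_eq_sub _ hJ]
  have ht : 0 < |ξ i0| := abs_pos.2 hξ
  calc _ ≤ ∑ k ∈ Finset.Ico J K, ‖∑ i ∈ Finset.range (m + 2), (Wt m k i : ℂ) * chr ξ (Xn i0 k i)‖ :=
        norm_sum_le _ _
    _ ≤ ∑ k ∈ Finset.Ico J K, ((J : ℝ) + 1)⁻¹ * (2 ^ (m + 1) * |ξ i0| ^ m *
          min (3 ^ k * |ξ i0|) (3 ^ k * |ξ i0|)⁻¹) := by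
        refine Finset.sum_le_sum fun k hk => (block_bound hm i0 k ξ hξ).trans ?_
        have : (J : ℝ) ≤ k := by exact_mod_cast (Finset.mem_Ico.1 hk).1
        gcongr
    _ ≤ ∑ k ∈ Finset.range K, ((J : ℝ) + 1)⁻¹ * (2 ^ (m + 1) * |ξ i0| ^ m *
          min (3 ^ k * |ξ i0|) (3 ^ k * |ξ i0|)⁻¹) := by
        refine Finset.sum_le_sum_of_subset_of_nonneg (fun k hk => ?_) fun k _ _ => by positivity
        exact Finset.mem_range.2 (Finset.mem_Ico.1 hk).2
    _ = ((J : ℝ) + 1)⁻¹ * (2 ^ (m + 1) * |ξ i0| ^ m) *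
          ∑ k ∈ Finset.range K, min (3 ^ k * |ξ i0|) (3 ^ k * |ξ i0|)⁻¹ := by
        rw [Finset.mul_sum]
        refine Finset.sum_congr rfl fun k _ => by ring
    _ ≤ ((J : ℝ) + 1)⁻¹ * (2 ^ (m + 1) * ‖ξ‖ ^ m) * 6 := by
        gcongr
        · exact PiLp.norm_apply_le ξ i0
        · exact tele K _ ht
    _ = _ := by ring

theorem lint_of_int {d m : ℕ} (p : Measure (Vd d))
    (h : Integrable (fun x : Vd d => ‖x‖ ^ m) p) : (∫⁻ x, (‖x‖₊ : ℝ≥0∞) ^ m ∂p) < ⊤ := by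
  have := h.2
  rw [hasFiniteIntegral_iff_enorm] at this
  convert this using 3 with x
  rw [enorm_pow, enorm_norm]; rfl

theorem sum_fin {d n : ℕ} (w : ℕ → ℕ → ℝ) (x : ℕ → ℕ → Vd d) (B : ℝ) (hB : 0 ≤ B)
    (hw : ∀ k i, w k i ≤ B * (1 / 3) ^ k) :
    IsFiniteMeasure (Measure.sum fun k => disc (Finset.range n) (w k) (x k)) := by
  refine ⟨?_⟩
  rw [Measure.sum_apply _ MeasurableSet.univ]
  have h1 : ∀ k, (disc (Finset.range n) (w k) (x k)) Set.univ ≤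
      ENNReal.ofReal (n * (B * (1 / 3) ^ k)) := by
    intro k
    unfold disc
    rw [Measure.finsetSum_apply]
    calc _ ≤ ∑ i ∈ Finset.range n, ENNReal.ofReal (B * (1 / 3) ^ k) := by
          refine Finset.sum_le_sum fun i _ => ?_
          simp only [Measure.smul_apply, measure_univ, smul_eq_mul, mul_one]
          exact ENNReal.ofReal_le_ofReal (hw k i)
      _ = _ := by
          rw [Finset.sum_const, Finset.card_range, ENNReal.ofReal_mul (p := (n : ℝ)) (by positivity),
            nsmul_eq_mul, ENNReal.ofReal_natCast]
  refine (ENNReal.tsum_le_tsum h1).trans_lt ?_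
  rw [← ENNReal.ofReal_tsum_of_nonneg (fun k => by positivity)]
  · exact ENNReal.ofReal_lt_top
  · exact ((summable_geometric_of_lt_one (by norm_num) (by norm_num)).mul_left B).mul_left _

theorem abs_Wt_le (m k i : ℕ) (hm : 0 < m) : |Wt m k i| ≤ 2 ^ (m + 1) * (1 / 3) ^ k := by
  unfold Wt
  rw [abs_mul, abs_mul, abs_pow, abs_neg, abs_one, one_pow, one_mul, abs_of_pos (ak_pos m k),
    Nat.abs_cast, mul_comm]
  have h1 : (((m + 1).choose i : ℕ) : ℝ) ≤ 2 ^ (m + 1) := by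
    exact_mod_cast Nat.choose_le_two_pow (m + 1) i
  have h2 : ak m k ≤ (1 / 3) ^ k := by
    unfold ak
    rw [one_div, inv_pow]
    calc _ ≤ 1 * (((3 : ℝ) ^ k) ^ m)⁻¹ := by
          gcongr
          exact inv_le_one_of_one_le₀ (by linarith [Nat.cast_nonneg (α := ℝ) k])
      _ ≤ _ := by
          rw [one_mul]
          gcongr
          exact le_self_pow₀ (one_le_pow₀ (by norm_num)) hm.ne'
  have := (ak_pos m k).le
  gcongr

theorem Xn_norm {d : ℕ} (i0 : Fin d) (k : ℕ) : ‖Xn i0 k 1‖ = 3 ^ k := by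
  simp [Xn]

theorem Xn_inj {d : ℕ} (i0 : Fin d) {k l i j : ℕ} (h : Xn i0 k i = Xn i0 l j) :
    i * 3 ^ k = j * 3 ^ l := by
  have := congrArg (fun x : Vd d => x i0) h
  simp [Xn] at this
  exact_mod_cast this

theorem noncomplete (d m : ℕ) (i0 : Fin d) (hm : 0 < m) (M : (Fin d → ℕ) → ℂ) :
    ∃ μs : ℕ → ComplexMeasure (Vd d),
      (∀ j, μs j ∈ MomentSet d m M) ∧
      (∀ ε : ℝ, 0 < ε → ∃ N : ℕ, ∀ j ≥ N, ∀ k ≥ N,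
        dm m (μs j) (μs k) < ENNReal.ofReal ε) ∧
      ¬ ∃ ν ∈ MomentSet d m M, Tendsto (fun j => dm m (μs j) ν) atTop (𝓝 0) := by
  obtain ⟨w, hw⟩ := exists_weights d m M
  let x : (Fin d → Fin (m + 1)) → Vd d := fun g => WithLp.toLp 2 fun i => ((g i : ℕ) : ℝ)
  let p0 := disc Finset.univ (fun g => (w g).re) x
  let n0 := disc Finset.univ (fun g => -(w g).re) x
  let q0 := disc Finset.univ (fun g => (w g).im) x
  let r0 := disc Finset.univ (fun g => -(w g).im) x
  let PJ : ℕ → Measure (Vd d) := fun j => disc (Finset.range j ×ˢ Finset.range (m + 2))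
    (fun y => Wt m y.1 y.2) (fun y => Xn i0 y.1 y.2)
  let NJ : ℕ → Measure (Vd d) := fun j => disc (Finset.range j ×ˢ Finset.range (m + 2))
    (fun y => -Wt m y.1 y.2) (fun y => Xn i0 y.1 y.2)
  have fp0 : IsFiniteMeasure p0 := disc_fin _ _ _
  have fn0 : IsFiniteMeasure n0 := disc_fin _ _ _
  have fq0 : IsFiniteMeasure q0 := disc_fin _ _ _
  have fr0 : IsFiniteMeasure r0 := disc_fin _ _ _
  have fPJ : ∀ j, IsFiniteMeasure (PJ j) := fun j => disc_fin _ _ _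
  have fNJ : ∀ j, IsFiniteMeasure (NJ j) := fun j => disc_fin _ _ _
  let μs : ℕ → ComplexMeasure (Vd d) := fun j => mkC (p0 + PJ j) (n0 + NJ j) q0 r0
  have hbase : ∀ f : Vd d → ℂ, ((∫ y, f y ∂p0) - ∫ y, f y ∂n0) +
      Complex.I * ((∫ y, f y ∂q0) - ∫ y, f y ∂r0) = ∑ g, w g * f (x g) := by
    intro f
    rw [disc_sub, disc_sub, Finset.mul_sum, ← Finset.sum_add_distrib]
    refine Finset.sum_congr rfl fun g _ => ?_
    conv_rhs => rw [← Complex.re_add_im (w g)]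
    ring
  have hcint : ∀ j (f : Vd d → ℂ), cint (μs j) f = (∑ g, w g * f (x g)) +
      ∑ k ∈ Finset.range j, ∑ i ∈ Finset.range (m + 2), (Wt m k i : ℂ) * f (Xn i0 k i) := by
    intro j f
    have hs := disc_sub (Finset.range j ×ˢ Finset.range (m + 2))
      (fun y => Wt m y.1 y.2) (fun y => Xn i0 y.1 y.2) f
    rw [Finset.sum_product] at hs
    rw [cint_mkC _ _ _ _ f ((disc_int _ _ _ f).add_measure (disc_int _ _ _ f))
      ((disc_int _ _ _ f).add_measure (disc_int _ _ _ f)) (disc_int _ _ _ f) (disc_int _ _ _ f),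
      integral_add_measure (disc_int _ _ _ f) (disc_int _ _ _ f),
      integral_add_measure (disc_int _ _ _ f) (disc_int _ _ _ f), ← hbase f, ← hs]
    ring
  have hmem : ∀ j, μs j ∈ MomentSet d m M := by
    intro j
    refine ⟨lint_of_int _ (Integrable.mono_measure ?_ (ctv_mkC_le _ _ _ _)), fun β hβ => ?_⟩
    · exact ((((disc_int _ _ _ _).add_measure (disc_int _ _ _ _))).add_measure
        ((disc_int _ _ _ _).add_measure (disc_int _ _ _ _))).add_measure
        ((disc_int _ _ _ _).add_measure (disc_int _ _ _ _))
    · rw [hcint, Finset.sum_eq_zero (fun k _ => block_moment i0 k β hβ), add_zero]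
      rw [← hw β fun i =>
        (Finset.single_le_sum (fun i _ => Nat.zero_le _) (Finset.mem_univ i)).trans hβ]
      simp [x]
  refine ⟨μs, hmem, ?_, ?_⟩
  · have hle : ∀ J K, J ≤ K → dm m (μs K) (μs J) ≤
        ENNReal.ofReal (6 * 2 ^ (m + 1) * ((J : ℝ) + 1)⁻¹) := by
      intro J K hJK
      refine dm_le m _ _ _ fun ξ _ => ?_
      rw [ftc_eq, ftc_eq, hcint, hcint, add_sub_add_left_eq_sub]
      exact tail_bound hm i0 J K hJK ξ
    intro ε hε
    obtain ⟨N, hN⟩ := exists_nat_gt (6 * 2 ^ (m + 1) / ε)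
    have hb : ∀ J ≥ N, ENNReal.ofReal (6 * 2 ^ (m + 1) * ((J : ℝ) + 1)⁻¹) < ENNReal.ofReal ε := by
      intro J hJ
      rw [ENNReal.ofReal_lt_ofReal_iff hε, ← div_eq_mul_inv, div_lt_iff₀ (by positivity)]
      rw [div_lt_iff₀ hε] at hN
      have : (N : ℝ) ≤ J := by exact_mod_cast hJ
      nlinarith
    refine ⟨N, fun j hj k hk => ?_⟩
    rcases le_total j k with h | h
    · rw [dm_comm']
      exact (hle j k h).trans_lt (hb j hj)
    · exact (hle k j h).trans_lt (hb k hk)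
  · rintro ⟨ν, hν, hlim⟩
    let P : Measure (Vd d) := Measure.sum fun k => disc (Finset.range (m + 2)) (Wt m k) (Xn i0 k)
    let N : Measure (Vd d) := Measure.sum fun k =>
      disc (Finset.range (m + 2)) (fun i => -Wt m k i) (Xn i0 k)
    have fP : IsFiniteMeasure P := sum_fin _ _ (2 ^ (m + 1)) (by positivity)
      fun k i => (le_abs_self _).trans (abs_Wt_le m k i hm)
    have fN : IsFiniteMeasure N := sum_fin (fun k i => -Wt m k i) _ (2 ^ (m + 1)) (by positivity)
      fun k i => (neg_le_abs _).trans (abs_Wt_le m k i hm)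
    have hνeq : ν = mkC (p0 + P) (n0 + N) q0 r0 := by
      apply ftc_inj
      intro ξ
      have t1 : Tendsto (fun j => ftc (μs j) ξ) atTop (𝓝 (ftc ν ξ)) := by
        by_cases hξ : ξ = 0
        · have : ∀ j, ftc (μs j) ξ = ftc ν ξ := fun j => by
            rw [hξ, ftc_zero (hmem j), ftc_zero hν]
          simp only [this]
          exact tendsto_const_nhds
        rw [tendsto_iff_norm_sub_tendsto_zero]
        have t : Tendsto (fun j => ENNReal.ofReal ‖ftc (μs j) ξ - ftc ν ξ‖) atTop (𝓝 0) := by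
          refine tendsto_of_tendsto_of_tendsto_of_le_of_le tendsto_const_nhds ?_
            (fun _ => zero_le) (fun j => ftc_le_of_dm m (μs j) ν ξ hξ)
          have := ENNReal.Tendsto.const_mul (a := ENNReal.ofReal (‖ξ‖ ^ m)) hlim
            (Or.inr ENNReal.ofReal_ne_top)
          simpa using this
        have := (ENNReal.tendsto_toReal ENNReal.zero_ne_top).comp t
        simpa [Function.comp_def] using this
      have t2 : Tendsto (fun j => ftc (μs j) ξ) atTop
          (𝓝 (ftc (mkC (p0 + P) (n0 + N) q0 r0) ξ)) := by
        have s1 := hasSum_integral_measure (chr_int ξ P)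
        have s2 := hasSum_integral_measure (chr_int ξ N)
        have s3 := (s1.sub s2).tendsto_sum_nat
        simp only [disc_sub] at s3
        have s4 := s3.const_add (∑ g, w g * chr ξ (x g))
        simp only [ftc_eq, hcint]
        convert s4 using 2
        rw [cint_mkC _ _ _ _ _ (chr_int _ _) (chr_int _ _) (chr_int _ _) (chr_int _ _),
          integral_add_measure (chr_int _ _) (chr_int _ _),
          integral_add_measure (chr_int _ _) (chr_int _ _), ← hbase]
        ring
      exact tendsto_nhds_unique t1 t2
    have hsum := jd_sum ν.re (p0 + P) (n0 + N) (by rw [hνeq]; rfl)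
    set Q := ν.re.toJordanDecomposition.posPart with hQ
    have hQi : Integrable (fun y : Vd d => ‖y‖ ^ m) Q := by
      have := int_pow_of_lint _ hν.1
      unfold ctv SignedMeasure.totalVariation at this
      simp only [integrable_add_measure] at this
      exact this.1.1
    have hfin := lint_of_int (m := m) (Q + n0) (hQi.add_measure (disc_int _ _ _ _))
    have hN0 : ∀ k, N {Xn i0 k 1} = 0 := by
      intro k
      rw [Measure.sum_apply _ (measurableSet_singleton _), ENNReal.tsum_eq_zero]
      intro l
      unfold disc
      rw [Measure.finsetSum_apply]
      refine Finset.sum_eq_zero fun i _ => ?_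
      rw [Measure.smul_apply, smul_eq_mul, mul_eq_zero]
      rcases Nat.even_or_odd i with hi | hi
      · right
        rw [Measure.dirac_apply' _ (measurableSet_singleton _), Set.indicator_of_notMem]
        intro h
        have h' := Xn_inj i0 (Set.mem_singleton_iff.1 h)
        have e1 : Even (i * 3 ^ l) := hi.mul_right _
        rw [h', one_mul] at e1
        have : Odd (3 ^ k) := Odd.pow (by decide)
        exact (Nat.not_even_iff_odd.2 this) e1
      · left
        rw [ENNReal.ofReal_eq_zero]
        unfold Wt
        beta_reduce
        rw [(hi.add_one).neg_one_pow]
        have := (ak_pos m l).le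
        simp only [one_mul, Left.neg_nonpos_iff]
        positivity
    have hPlow : ∀ k, ENNReal.ofReal (ak m k) ≤ P {Xn i0 k 1} := by
      intro k
      rw [Measure.sum_apply _ (measurableSet_singleton _)]
      refine le_trans ?_ (ENNReal.le_tsum k)
      unfold disc
      rw [Measure.finsetSum_apply]
      refine le_trans ?_ (Finset.single_le_sum (fun i _ => zero_le)
        (Finset.mem_range.2 (by omega : 1 < m + 2)))
      simp only [Measure.smul_apply, smul_eq_mul]
      rw [Measure.dirac_apply' _ (measurableSet_singleton _),
        Set.indicator_of_mem (Set.mem_singleton _)]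
      simp only [Pi.one_apply, mul_one]
      apply ENNReal.ofReal_le_ofReal
      unfold Wt
      have := (ak_pos m k)
      simp
      nlinarith [Nat.cast_nonneg (α := ℝ) m]
    have hQlow : ∀ k, ENNReal.ofReal (ak m k) ≤ (Q + n0) {Xn i0 k 1} := by
      intro k
      have := congrArg (fun μ : Measure (Vd d) => μ {Xn i0 k 1}) hsum
      simp only [Measure.add_apply, hN0, add_zero] at this
      rw [Measure.add_apply, this]
      refine (hPlow k).trans ?_
      rw [add_assoc, add_left_comm]
      exact le_self_add
    have hlow : ∑' k : ℕ, ENNReal.ofReal (1 / ((k : ℝ) + 1)) ≤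
        ∫⁻ y, (‖y‖₊ : ℝ≥0∞) ^ m ∂(Q + n0) := by
      calc _ ≤ ∑' k : ℕ, ∫⁻ y in {Xn i0 k 1}, (‖y‖₊ : ℝ≥0∞) ^ m ∂(Q + n0) := by
            refine ENNReal.tsum_le_tsum fun k => ?_
            rw [lintegral_singleton]
            refine le_trans ?_ (mul_le_mul_right (hQlow k) _)
            have : ((‖Xn i0 k 1‖₊ : ℝ≥0∞)) = ENNReal.ofReal (3 ^ k) := by
              rw [← Xn_norm i0 k, ofReal_norm]; rfl
            rw [this, ← ENNReal.ofReal_pow (by positivity), ← ENNReal.ofReal_mul (by positivity)]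
            apply ENNReal.ofReal_le_ofReal
            unfold ak
            apply le_of_eq
            field_simp
        _ = ∫⁻ y in ⋃ k, {Xn i0 k 1}, (‖y‖₊ : ℝ≥0∞) ^ m ∂(Q + n0) := by
            rw [lintegral_iUnion (fun k => measurableSet_singleton _)]
            intro k l hkl
            rw [Function.onFun, Set.disjoint_singleton]
            intro h
            have := Xn_inj i0 h
            simp at this
            exact hkl this
        _ ≤ _ := setLIntegral_le_lintegral _ _
    have hs := ENNReal.summable_toReal (hlow.trans_lt hfin).ne
    have hs2 : Summable (fun k : ℕ => 1 / ((k + 1 : ℕ) : ℝ)) := by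
      refine hs.congr fun k => ?_
      rw [ENNReal.toReal_ofReal (by positivity)]; push_cast; rfl
    exact Real.not_summable_one_div_natCast ((summable_nat_add_iff 1).1 hs2)

/-- For any integer `m ≥ 2` and prescribed moments `M`, the distance `d_m` is
finite on `𝓜_m^M × 𝓜_m^M` and satisfies the metric axioms there (so `(𝓜_m^M, d_m)` is a metric
space), but this metric space is not complete: there is a `d_m`-Cauchy sequence in `𝓜_m^M`
with no limit in `𝓜_m^M`. -/
theorem stmt0 (d m : ℕ) (hd : 0 < d) (hm : 2 ≤ m) (M : (Fin d → ℕ) → ℂ) :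
    (∀ ν₁ ∈ MomentSet d m M, ∀ ν₂ ∈ MomentSet d m M, dm m ν₁ ν₂ < ⊤) ∧
    (∀ ν₁ ∈ MomentSet d m M, ∀ ν₂ ∈ MomentSet d m M, (dm m ν₁ ν₂ = 0 ↔ ν₁ = ν₂)) ∧
    (∀ ν₁ ν₂ : ComplexMeasure (Vd d), dm m ν₁ ν₂ = dm m ν₂ ν₁) ∧
    (∀ ν₁ ν₂ ν₃ : ComplexMeasure (Vd d), dm m ν₁ ν₃ ≤ dm m ν₁ ν₂ + dm m ν₂ ν₃) ∧
    ∃ μs : ℕ → ComplexMeasure (Vd d),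
      (∀ j, μs j ∈ MomentSet d m M) ∧
      (∀ ε : ℝ, 0 < ε → ∃ N : ℕ, ∀ j ≥ N, ∀ k ≥ N,
        dm m (μs j) (μs k) < ENNReal.ofReal ε) ∧
      ¬ ∃ ν ∈ MomentSet d m M, Tendsto (fun j => dm m (μs j) ν) atTop (𝓝 0) := by
  have hm0 : 0 < m := by omega
  exact ⟨fun ν₁ h₁ ν₂ h₂ => dm_fin hm0 h₁ h₂, fun ν₁ h₁ ν₂ h₂ => dm_zero_iff h₁ h₂,
    dm_comm' m, dm_tri m, noncomplete d m ⟨0, hd⟩ hm0 M⟩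

end
end

section
/- Fix an integer m ≥ 2 and M = {M_β}_{|β|≤m} ⊆ ℂ. For each δ > 0, the function φ_δ belongs to the Schwartz class 𝒮(ℝ^d). -/
open MeasureTheory Filter Topology
open scoped ENNReal NNReal

noncomputable section
open scoped Classical


/-- Building block on the half-line, extended by zero. -/
def Eblk (b c δ s : ℝ) (a : ℝ) (t : ℝ) : ℂ :=
  if 0 < t then ((t ^ a : ℝ) : ℂ) *
    Complex.exp ((s : ℂ) * Complex.I * ((t ^ (-b) : ℝ) : ℂ) - (δ : ℂ) * ((t ^ (-1 : ℝ) : ℝ) : ℂ)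
      - ((t ^ c : ℝ) : ℂ))
  else 0

lemma Eblk_of_nonpos (b c δ s a : ℝ) {t : ℝ} (ht : t ≤ 0) : Eblk b c δ s a t = 0 := by
  simp [Eblk, not_lt.mpr ht]

lemma Eblk_norm (b c δ s a : ℝ) {t : ℝ} (ht : 0 < t) :
    ‖Eblk b c δ s a t‖ = t ^ a * Real.exp (-(δ * t⁻¹) - t ^ c) := by
  rw [Eblk, if_pos ht, norm_mul, Complex.norm_exp, Complex.norm_real, Real.norm_eq_abs,
    abs_of_pos (Real.rpow_pos_of_pos ht a), Real.rpow_neg_one]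
  congr 2
  simp only [Complex.sub_re, Complex.mul_re, Complex.mul_im, Complex.ofReal_re, Complex.ofReal_im,
    Complex.I_re, Complex.I_im]
  ring

lemma Eblk_bdd (b c δ s a : ℝ) (hc : 1 ≤ c) (hδ : 0 < δ) :
    ∃ C : ℝ, 0 ≤ C ∧ ∀ t, ‖Eblk b c δ s a t‖ ≤ C := by
  obtain ⟨N, hN⟩ := exists_nat_ge |a|
  have hN1 : a ≤ N := (le_abs_self a).trans hN
  have hN2 : -(N : ℝ) ≤ a := by linarith [neg_abs_le a]
  have hC1 : (0 : ℝ) ≤ (N.factorial : ℝ) := by positivity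
  have hC2 : (0 : ℝ) ≤ (N.factorial : ℝ) * (δ⁻¹) ^ N := by positivity
  refine ⟨N.factorial + N.factorial * (δ⁻¹) ^ N, by positivity, fun t => ?_⟩
  rcases le_or_gt t 0 with ht | ht
  · rw [Eblk_of_nonpos _ _ _ _ _ ht, norm_zero]; positivity
  rw [Eblk_norm _ _ _ _ _ ht]
  rcases le_total 1 t with h1 | h1
  · have e1 : t ^ a ≤ t ^ N := by
      rw [← Real.rpow_natCast]; exact Real.rpow_le_rpow_of_exponent_le h1 hN1
    have e2 : t ≤ t ^ c := by
      simpa using Real.rpow_le_rpow_of_exponent_le h1 hc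
    have e3 : Real.exp (-(δ * t⁻¹) - t ^ c) ≤ Real.exp (-t) := by
      apply Real.exp_le_exp.mpr
      have : 0 ≤ δ * t⁻¹ := by positivity
      linarith
    have e4 := Real.pow_div_factorial_le_exp t ht.le N
    rw [div_le_iff₀ (by positivity)] at e4
    calc t ^ a * Real.exp (-(δ * t⁻¹) - t ^ c) ≤ (Real.exp t * N.factorial) * Real.exp (-t) :=
          mul_le_mul (e1.trans e4) e3 (Real.exp_nonneg _) (by positivity)
      _ = N.factorial := by rw [Real.exp_neg]; field_simp
      _ ≤ _ := by linarith
  · have e1 : t ^ a ≤ (t⁻¹) ^ N := by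
      rw [inv_pow, ← Real.rpow_natCast, ← Real.rpow_neg ht.le]
      exact Real.rpow_le_rpow_of_exponent_ge ht h1 hN2
    have e3 : Real.exp (-(δ * t⁻¹) - t ^ c) ≤ Real.exp (-(δ * t⁻¹)) := by
      apply Real.exp_le_exp.mpr
      have : 0 ≤ t ^ c := by positivity
      linarith
    have e4 := Real.pow_div_factorial_le_exp (δ * t⁻¹) (by positivity) N
    rw [div_le_iff₀ (by positivity)] at e4
    have e5 : (t⁻¹) ^ N ≤ Real.exp (δ * t⁻¹) * N.factorial * (δ⁻¹) ^ N := by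
      calc (t⁻¹) ^ N = (δ * t⁻¹) ^ N * (δ⁻¹) ^ N := by rw [← mul_pow]; congr 1; field_simp
        _ ≤ _ := by gcongr
    calc t ^ a * Real.exp (-(δ * t⁻¹) - t ^ c)
        ≤ (Real.exp (δ * t⁻¹) * N.factorial * (δ⁻¹) ^ N) * Real.exp (-(δ * t⁻¹)) :=
          mul_le_mul (e1.trans e5) e3 (Real.exp_nonneg _) (by positivity)
      _ = N.factorial * (δ⁻¹) ^ N := by rw [Real.exp_neg]; field_simp
      _ ≤ _ := by linarith

lemma Eblk_pow (b c δ s a : ℝ) (k : ℕ) (t : ℝ) :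
    ‖t‖ ^ k * ‖Eblk b c δ s a t‖ = ‖Eblk b c δ s (a + k) t‖ := by
  rcases le_or_gt t 0 with ht | ht
  · simp [Eblk_of_nonpos _ _ _ _ _ ht]
  · rw [Eblk_norm _ _ _ _ _ ht, Eblk_norm _ _ _ _ _ ht, Real.rpow_add ht, Real.rpow_natCast,
      Real.norm_eq_abs, abs_of_pos ht]
    ring

def Eder (b c δ s a : ℝ) : ℝ → ℂ :=
  (a : ℂ) • Eblk b c δ s (a - 1) + (-(s * Complex.I * b) : ℂ) • Eblk b c δ s (a + (-b - 1))
    + (δ : ℂ) • Eblk b c δ s (a + (-1 - 1)) + (-c : ℂ) • Eblk b c δ s (a + (c - 1))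

lemma Eblk_deriv (b c δ s a : ℝ) (hc : 1 ≤ c) (hδ : 0 < δ) (t : ℝ) :
    HasDerivAt (Eblk b c δ s a) (Eder b c δ s a t) t := by
  rcases lt_trichotomy t 0 with ht | ht | ht
  · have h0 : Eder b c δ s a t = 0 := by simp [Eder, Eblk_of_nonpos _ _ _ _ _ ht.le]
    rw [h0]
    apply (hasDerivAt_const t (0 : ℂ)).congr_of_eventuallyEq
    filter_upwards [Iio_mem_nhds ht] with x hx
    exact Eblk_of_nonpos _ _ _ _ _ (le_of_lt hx)
  · subst ht
    have h0 : Eder b c δ s a 0 = 0 := by simp [Eder, Eblk_of_nonpos _ _ _ _ _ le_rfl]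
    rw [h0]
    obtain ⟨C, -, hC⟩ := Eblk_bdd b c δ s (a - 2) hc hδ
    have hO : (Eblk b c δ s a) =O[𝓝 (0 : ℝ)] fun x => ‖x - 0‖ ^ 2 := by
      apply Asymptotics.IsBigO.of_bound C
      filter_upwards with x
      have := Eblk_pow b c δ s (a - 2) 2 x
      have e : a - 2 + ((2 : ℕ) : ℝ) = a := by push_cast; ring
      rw [e] at this
      rw [← this, sub_zero, norm_pow, norm_norm, mul_comm]
      gcongr
      exact hC x
    have := (hO.hasFDerivAt (𝕜 := ℝ) (by norm_num)).hasDerivAt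
    simpa using this
  · have hp : ∀ p : ℝ, HasDerivAt (fun x : ℝ => ((x ^ p : ℝ) : ℂ)) ((p * t ^ (p - 1) : ℝ) : ℂ) t :=
      fun p => (Real.hasDerivAt_rpow_const (Or.inl ht.ne')).ofReal_comp
    have hmain := (hp a).mul ((((hp (-b)).const_mul ((s : ℂ) * Complex.I)).sub
      ((hp (-1)).const_mul (δ : ℂ))).sub (hp c)).cexp
    have hE : Eblk b c δ s a =ᶠ[𝓝 t] fun t => ((t ^ a : ℝ) : ℂ) *
      Complex.exp ((s : ℂ) * Complex.I * ((t ^ (-b) : ℝ) : ℂ) - (δ : ℂ) * ((t ^ (-1 : ℝ) : ℝ) : ℂ)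
      - ((t ^ c : ℝ) : ℂ)) := by
      filter_upwards [Ioi_mem_nhds ht] with x hx
      exact if_pos hx
    refine HasDerivAt.congr_of_eventuallyEq ?_ hE
    refine hmain.congr_deriv ?_
    simp only [Eder, Pi.add_apply, Pi.smul_apply, smul_eq_mul, Eblk, if_pos ht,
      Real.rpow_add ht a]
    push_cast
    simp only [Pi.sub_apply]
    ring

/-- The span of the building blocks. -/
def Espan (b c δ s : ℝ) : Submodule ℂ (ℝ → ℂ) := Submodule.span ℂ (Set.range (Eblk b c δ s))

lemma Eblk_mem (b c δ s a : ℝ) : Eblk b c δ s a ∈ Espan b c δ s :=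
  Submodule.subset_span ⟨a, rfl⟩

lemma Espan_deriv (b c δ s : ℝ) (hc : 1 ≤ c) (hδ : 0 < δ) (f : ℝ → ℂ) (hf : f ∈ Espan b c δ s) :
    ∃ g ∈ Espan b c δ s, ∀ t, HasDerivAt f (g t) t := by
  induction hf using Submodule.span_induction with
  | mem x h =>
    obtain ⟨a, rfl⟩ := h
    refine ⟨Eder b c δ s a, ?_, Eblk_deriv b c δ s a hc hδ⟩
    unfold Eder
    exact add_mem (add_mem (add_mem (Submodule.smul_mem _ _ (Eblk_mem _ _ _ _ _))
      (Submodule.smul_mem _ _ (Eblk_mem _ _ _ _ _))) (Submodule.smul_mem _ _ (Eblk_mem _ _ _ _ _)))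
      (Submodule.smul_mem _ _ (Eblk_mem _ _ _ _ _))
  | zero => exact ⟨0, zero_mem _, fun t => hasDerivAt_const t 0⟩
  | add x y _ _ hx hy =>
    obtain ⟨g, hg, hg'⟩ := hx
    obtain ⟨h, hh, hh'⟩ := hy
    exact ⟨g + h, add_mem hg hh, fun t => (hg' t).add (hh' t)⟩
  | smul z x _ hx =>
    obtain ⟨g, hg, hg'⟩ := hx
    exact ⟨z • g, Submodule.smul_mem _ _ hg, fun t => (hg' t).const_smul z⟩

lemma Espan_decay (b c δ s : ℝ) (hc : 1 ≤ c) (hδ : 0 < δ) (f : ℝ → ℂ) (hf : f ∈ Espan b c δ s)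
    (k : ℕ) : ∃ C : ℝ, ∀ t, ‖t‖ ^ k * ‖f t‖ ≤ C := by
  induction hf using Submodule.span_induction with
  | mem x h =>
    obtain ⟨a, rfl⟩ := h
    obtain ⟨C, -, hC⟩ := Eblk_bdd b c δ s (a + k) hc hδ
    exact ⟨C, fun t => (Eblk_pow b c δ s a k t).trans_le (hC t)⟩
  | zero => exact ⟨0, fun t => by simp⟩
  | add x y _ _ hx hy =>
    obtain ⟨C, hC⟩ := hx
    obtain ⟨D, hD⟩ := hy
    refine ⟨C + D, fun t => ?_⟩
    calc ‖t‖ ^ k * ‖(x + y) t‖ ≤ ‖t‖ ^ k * (‖x t‖ + ‖y t‖) := by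
          gcongr; exact norm_add_le _ _
      _ ≤ _ := by rw [mul_add]; exact add_le_add (hC t) (hD t)
  | smul z x _ hx =>
    obtain ⟨C, hC⟩ := hx
    refine ⟨‖z‖ * C, fun t => ?_⟩
    calc ‖t‖ ^ k * ‖(z • x) t‖ = ‖z‖ * (‖t‖ ^ k * ‖x t‖) := by
          rw [Pi.smul_apply, norm_smul]; ring
      _ ≤ _ := by gcongr; exact hC t

lemma Espan_iter (b c δ s : ℝ) (hc : 1 ≤ c) (hδ : 0 < δ) (f : ℝ → ℂ) (hf : f ∈ Espan b c δ s)
    (n : ℕ) : iteratedDeriv n f ∈ Espan b c δ s := by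
  induction n with
  | zero => simpa using hf
  | succ n ih =>
    obtain ⟨g, hg, hg'⟩ := Espan_deriv b c δ s hc hδ _ ih
    rw [iteratedDeriv_succ]
    have : deriv (iteratedDeriv n f) = g := funext fun t => (hg' t).deriv
    rwa [this]

def Eschwartz (b c δ s a : ℝ) (hc : 1 ≤ c) (hδ : 0 < δ) : SchwartzMap ℝ ℂ where
  toFun := Eblk b c δ s a
  smooth' := by
    apply contDiff_of_differentiable_iteratedDeriv
    intro n _
    obtain ⟨g, -, hg⟩ := Espan_deriv b c δ s hc hδ _
      (Espan_iter b c δ s hc hδ _ (Eblk_mem b c δ s a) n)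
    exact fun t => (hg t).differentiableAt
  decay' := by
    intro k n
    simp only [norm_iteratedFDeriv_eq_norm_iteratedDeriv]
    exact Espan_decay b c δ s hc hδ _ (Espan_iter b c δ s hc hδ _ (Eblk_mem b c δ s a) n) k

def Hfun (t : ℝ) : ℂ := ((Real.smoothTransition (t + 1) * Real.exp (-t) : ℝ) : ℂ)

lemma Hfun_smooth : ContDiff ℝ ((⊤ : ℕ∞) : WithTop ℕ∞) Hfun := by
  unfold Hfun
  apply Complex.ofRealCLM.contDiff.comp
  exact (Real.smoothTransition.contDiff.comp (contDiff_id.add contDiff_const)).mul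
    (Real.contDiff_exp.comp contDiff_neg)

lemma iter_exp (n : ℕ) (t : ℝ) : ‖iteratedDeriv n (fun t : ℝ => ((Real.exp (-t) : ℝ) : ℂ)) t‖
    = Real.exp (-t) := by
  have : ∀ n : ℕ, iteratedDeriv n (fun t : ℝ => ((Real.exp (-t) : ℝ) : ℂ))
      = fun t => (-1) ^ n * ((Real.exp (-t) : ℝ) : ℂ) := by
    intro n
    induction n with
    | zero => simp
    | succ n ih =>
      rw [iteratedDeriv_succ, ih]
      funext t
      have := (((hasDerivAt_id t).neg.exp).ofReal_comp).const_mul ((-1 : ℂ) ^ n)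
      refine HasDerivAt.deriv (this.congr_deriv ?_)
      simp [pow_succ]
  rw [this, norm_mul, Complex.norm_real]
  simp

def Hschwartz : SchwartzMap ℝ ℂ where
  toFun := Hfun
  smooth' := Hfun_smooth
  decay' := by
    intro k n
    simp only [norm_iteratedFDeriv_eq_norm_iteratedDeriv]
    have hcont : Continuous (fun t : ℝ => ‖t‖ ^ k * ‖iteratedDeriv n Hfun t‖) := by
      have := Hfun_smooth.continuous_iteratedDeriv n (by exact_mod_cast le_top)
      fun_prop
    obtain ⟨C, hC⟩ := (isCompact_Icc (a := (-1 : ℝ)) (b := 0)).bddAbove_image hcont.continuousOn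
    have hC' : ∀ t ∈ Set.Icc (-1 : ℝ) 0, ‖t‖ ^ k * ‖iteratedDeriv n Hfun t‖ ≤ C :=
      fun t ht => hC ⟨t, ht, rfl⟩
    have hC0 : 0 ≤ C := le_trans (by positivity) (hC' 0 (by simp))
    refine ⟨C + k.factorial, fun t => ?_⟩
    have hk : (0 : ℝ) ≤ k.factorial := by positivity
    rcases lt_or_ge t (-1) with h1 | h1
    · have he : Hfun =ᶠ[𝓝 t] fun _ => 0 := by
        filter_upwards [Iio_mem_nhds h1] with x hx
        have : x + 1 ≤ 0 := by have : x < -1 := hx; linarith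
        simp [Hfun, Real.smoothTransition.zero_of_nonpos this]
      rw [he.iteratedDeriv_eq]
      simp only [iteratedDeriv_const]
      simp
      positivity
    rcases le_or_gt t 0 with h2 | h2
    · linarith [hC' t ⟨h1, h2⟩]
    · have he : Hfun =ᶠ[𝓝 t] fun t : ℝ => ((Real.exp (-t) : ℝ) : ℂ) := by
        filter_upwards [Ioi_mem_nhds h2] with x hx
        have : 1 ≤ x + 1 := by have : 0 < x := hx; linarith
        simp [Hfun, Real.smoothTransition.one_of_one_le this]
      rw [he.iteratedDeriv_eq, iter_exp, Real.norm_eq_abs, abs_of_pos h2]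
      have e4 := Real.pow_div_factorial_le_exp t h2.le k
      rw [div_le_iff₀ (by positivity)] at e4
      calc t ^ k * Real.exp (-t) ≤ (Real.exp t * k.factorial) * Real.exp (-t) := by gcongr
        _ = k.factorial := by rw [Real.exp_neg]; field_simp
        _ ≤ _ := by linarith

lemma norm_sq_upper (d : ℕ) : ∃ (k : ℕ) (C : ℝ), ∀ x : Vd d, ‖x‖ ≤ C * (1 + ‖‖x‖ ^ 2‖) ^ k := by
  refine ⟨1, 1, fun x => ?_⟩
  rw [norm_pow, norm_norm]
  nlinarith [sq_nonneg (‖x‖ - 1), norm_nonneg x]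

lemma norm_pow_upper (d m : ℕ) (hm : 2 ≤ m) :
    ∃ (k : ℕ) (C : ℝ), ∀ x : Vd d, ‖x‖ ≤ C * (1 + ‖(‖x‖ ^ 2) ^ m‖) ^ k := by
  refine ⟨1, 1, fun x => ?_⟩
  rw [norm_pow, norm_pow, norm_norm, one_mul, pow_one, ← pow_mul]
  rcases le_total ‖x‖ 1 with h | h
  · have : 0 ≤ ‖x‖ ^ (2 * m) := by positivity
    linarith
  · have := le_self_pow₀ h (show 2 * m ≠ 0 by omega)
    linarith

lemma Ppoly_temperate (d m : ℕ) (M : (Fin d → ℕ) → ℂ) :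
    (Ppoly d m M).HasTemperateGrowth := by
  have hcoord : ∀ i : Fin d, Function.HasTemperateGrowth (fun ξ : Vd d => ((ξ i : ℝ) : ℂ)) := by
    intro i
    exact (Complex.ofRealCLM.comp
      (EuclideanSpace.proj i : Vd d →L[ℝ] ℝ)).hasTemperateGrowth
  have hprod : ∀ (γ : Fin d → ℕ) (s : Finset (Fin d)), Function.HasTemperateGrowth
      (fun ξ : Vd d => ∏ i ∈ s, (-(Complex.I) * (ξ i)) ^ (γ i)) := by
    intro γ s
    induction s using Finset.induction_on with
    | empty => simp only [Finset.prod_empty]; fun_prop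
    | insert i s hi ih =>
      simp only [Finset.prod_insert hi]
      have := hcoord i
      fun_prop
  unfold Ppoly
  apply Function.HasTemperateGrowth.sum
  intro γ _
  have := hprod γ Finset.univ
  fun_prop

/-- For `m ≥ 2`, prescribed moments `M` and `δ > 0`, the function `φ_δ`
belongs to the Schwartz class `𝒮(ℝ^d)`. -/
theorem stmt2 (d m : ℕ) (hm : 2 ≤ m) (M : (Fin d → ℕ) → ℂ) (δ : ℝ) (hδ : 0 < δ) :
    ∃ ψ : SchwartzMap (Vd d) ℂ, ⇑ψ = phiFun d m M δ := by
  have hc : (1 : ℝ) ≤ (m : ℝ) := by exact_mod_cast (by omega : 1 ≤ m)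
  have hq : Function.HasTemperateGrowth (fun x : Vd d => ‖x‖ ^ 2) := by fun_prop
  have hq2 : Function.HasTemperateGrowth (fun x : Vd d => (‖x‖ ^ 2) ^ m) := by fun_prop
  let K := fun s : ℝ => SchwartzMap.compCLM ℂ hq (norm_sq_upper d)
    (Eschwartz ((m : ℝ) / 2) m δ s (((m : ℝ) + 2) / 2) hc hδ)
  let G := SchwartzMap.compCLM ℂ hq2 (norm_pow_upper d m hm) Hschwartz
  have hK : ∀ s ξ, K s ξ = Eblk ((m : ℝ) / 2) m δ s (((m : ℝ) + 2) / 2) (‖ξ‖ ^ 2) :=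
    fun s ξ => rfl
  have hG : ∀ ξ, G ξ = ((Real.exp (-‖ξ‖ ^ (2 * m)) : ℝ) : ℂ) := by
    intro ξ
    change Hfun ((‖ξ‖ ^ 2) ^ m) = _
    have : 1 ≤ (‖ξ‖ ^ 2) ^ m + 1 := by
      have : 0 ≤ (‖ξ‖ ^ 2) ^ m := by positivity
      linarith
    rw [Hfun, Real.smoothTransition.one_of_one_le this, one_mul, pow_mul]
  refine ⟨SchwartzMap.smulLeftCLM ℂ (Ppoly d m M) G + (-Complex.I / 2) • (K 1 - K (-1)), ?_⟩
  funext ξ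
  rw [SchwartzMap.add_apply, SchwartzMap.smul_apply, SchwartzMap.sub_apply,
    SchwartzMap.smulLeftCLM_apply_apply (Ppoly_temperate d m M), hG, hK, hK]
  by_cases h0 : ξ = 0
  · subst h0
    have : 2 * m ≠ 0 := by omega
    simp [phiFun, Eblk, this]
  · have hr : 0 < ‖ξ‖ := norm_pos_iff.mpr h0
    have ht : 0 < ‖ξ‖ ^ 2 := by positivity
    have r1 : (‖ξ‖ ^ 2) ^ (((m : ℝ) + 2) / 2) = ‖ξ‖ ^ (m + 2) := by
      rw [← Real.rpow_natCast, ← Real.rpow_natCast, ← Real.rpow_mul hr.le]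
      congr 1; push_cast; ring
    have r2 : (‖ξ‖ ^ 2) ^ (-((m : ℝ) / 2)) = 1 / ‖ξ‖ ^ m := by
      rw [one_div, ← Real.rpow_natCast, ← Real.rpow_natCast, ← Real.rpow_mul hr.le,
        ← Real.rpow_neg hr.le]
      congr 1; push_cast; ring
    have r3 : (‖ξ‖ ^ 2) ^ (m : ℝ) = ‖ξ‖ ^ (2 * m) := by
      rw [Real.rpow_natCast, pow_mul]
    simp only [phiFun, if_neg h0, Eblk, if_pos ht, r1, r2, r3, Real.rpow_neg_one, smul_eq_mul]
    generalize 1 / ‖ξ‖ ^ m = u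
    have e : -δ / ‖ξ‖ ^ 2 = -(δ * (‖ξ‖ ^ 2)⁻¹) := by ring
    rw [e]
    generalize (‖ξ‖ ^ 2)⁻¹ = v
    generalize ‖ξ‖ ^ (2 * m) = w
    push_cast
    rw [Complex.sin]
    simp only [sub_eq_add_neg, Complex.exp_add, Complex.exp_neg, one_mul, neg_mul]
    rw [mul_comm (u : ℂ) Complex.I]
    ring

end
end

section
/- Fix an integer m ≥ 2 and δ > 0, and let f_δ(ξ) = |ξ|^{m+2} sin(1/|ξ|^m) e^{−δ/|ξ|^2} for ξ ≠ 0, f_δ(0) = 0. For every multi-index β ∈ ℕ^d there exist a constant C > 0 and an integer l ≥ 1 such that |(D^β f_δ)(ξ)| ≤ C(1 + |ξ|^l) for all ξ ∈ ℝ^d. -/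
open MeasureTheory Filter Topology
open scoped ENNReal NNReal

noncomputable section
open scoped Classical


/-- Radial building block. -/
def Tb (d m : ℕ) (δ : ℝ) (k : ℤ) (θ : ℝ) (ξ : Vd d) : ℝ :=
  if ξ = 0 then 0
  else ‖ξ‖ ^ k * Real.sin (1 / ‖ξ‖ ^ m + θ) * Real.exp (-δ / ‖ξ‖ ^ 2)

/-- A class of functions closed under partial derivatives. -/
inductive GG (d m : ℕ) (δ : ℝ) : (Vd d → ℝ) → Prop
  | base (k : ℤ) (θ : ℝ) : GG d m δ (Tb d m δ k θ)
  | coord (j : Fin d) (g : Vd d → ℝ) : GG d m δ g → GG d m δ (fun ξ => ξ j * g ξ)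
  | smul (c : ℝ) (g : Vd d → ℝ) : GG d m δ g → GG d m δ (fun ξ => c * g ξ)
  | add (g h : Vd d → ℝ) : GG d m δ g → GG d m δ h → GG d m δ (fun ξ => g ξ + h ξ)

lemma radial_bound (δ : ℝ) (hδ : 0 < δ) (k : ℤ) : ∃ C : ℝ, 0 < C ∧ ∃ l : ℕ, ∀ r : ℝ, 0 < r →
    r ^ k * Real.exp (-δ / r ^ 2) ≤ C * r ^ 2 * (1 + r) ^ l := by
  obtain ⟨n, l, hnl⟩ : ∃ n l : ℕ, k + 2 * n = 2 + l :=
    ⟨(k - 2).natAbs, (k - 2 + 2 * (k - 2).natAbs).toNat, by omega⟩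
  refine ⟨n.factorial / δ ^ n, by positivity, l, fun r hr => ?_⟩
  have h1 := Real.pow_div_factorial_le_exp (δ / r ^ 2) (by positivity) n
  have h2 : Real.exp (-δ / r ^ 2) ≤ n.factorial / δ ^ n * r ^ (2 * n) := by
    rw [neg_div, Real.exp_neg]
    refine (inv_anti₀ (by positivity) h1).trans (le_of_eq ?_)
    rw [div_pow, ← pow_mul]
    field_simp
  have h3 : r ^ k * r ^ (2 * n) = r ^ 2 * r ^ l := by
    have : r ^ (k + 2 * (n : ℤ)) = r ^ (2 + (l : ℤ)) := by rw [hnl]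
    rw [zpow_add₀ hr.ne', zpow_add₀ hr.ne'] at this
    exact_mod_cast this
  calc r ^ k * Real.exp (-δ / r ^ 2) ≤ r ^ k * (n.factorial / δ ^ n * r ^ (2 * n)) := by gcongr
    _ = n.factorial / δ ^ n * (r ^ k * r ^ (2 * n)) := by ring
    _ = n.factorial / δ ^ n * r ^ 2 * r ^ l := by rw [h3]; ring
    _ ≤ _ := by gcongr; linarith

lemma GG.bound {d m : ℕ} {δ : ℝ} (hδ : 0 < δ) {g : Vd d → ℝ} (hg : GG d m δ g) :
    ∃ C : ℝ, 0 < C ∧ ∃ l : ℕ, ∀ ξ, |g ξ| ≤ C * ‖ξ‖ ^ 2 * (1 + ‖ξ‖) ^ l := by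
  induction hg with
  | base k θ =>
    obtain ⟨C, hC, l, h⟩ := radial_bound δ hδ k
    refine ⟨C, hC, l, fun ξ => ?_⟩
    by_cases hξ : ξ = 0
    · simp [Tb, hξ]
    · have hr : 0 < ‖ξ‖ := norm_pos_iff.2 hξ
      simp only [Tb, if_neg hξ, abs_mul, Real.abs_exp]
      rw [abs_of_pos (zpow_pos hr k)]
      refine le_trans ?_ (h _ hr)
      gcongr
      exact mul_le_of_le_one_right (zpow_pos hr k).le (Real.abs_sin_le_one _)
  | coord j g _ ih =>
    obtain ⟨C, hC, l, h⟩ := ih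
    refine ⟨C, hC, l + 1, fun ξ => ?_⟩
    have h1 : |ξ j| ≤ 1 + ‖ξ‖ := by
      have := PiLp.norm_apply_le ξ j
      rw [Real.norm_eq_abs] at this
      linarith
    rw [abs_mul]
    calc _ ≤ (1 + ‖ξ‖) * (C * ‖ξ‖ ^ 2 * (1 + ‖ξ‖) ^ l) := by gcongr; exact h ξ
      _ = _ := by ring
  | smul c g _ ih =>
    obtain ⟨C, hC, l, h⟩ := ih
    refine ⟨(|c| + 1) * C, by positivity, l, fun ξ => ?_⟩
    rw [abs_mul]
    calc _ ≤ (|c| + 1) * (C * ‖ξ‖ ^ 2 * (1 + ‖ξ‖) ^ l) := by gcongr; linarith; exact h ξ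
      _ = _ := by ring
  | add g h _ _ ih1 ih2 =>
    obtain ⟨C, hC, l, h⟩ := ih1
    obtain ⟨C', hC', l', h'⟩ := ih2
    refine ⟨C + C', by positivity, l + l', fun ξ => ?_⟩
    have e1 : (1 + ‖ξ‖) ^ l ≤ (1 + ‖ξ‖) ^ (l + l') :=
      pow_le_pow_right₀ (by linarith [norm_nonneg ξ]) (by omega)
    have e2 : (1 + ‖ξ‖) ^ l' ≤ (1 + ‖ξ‖) ^ (l + l') :=
      pow_le_pow_right₀ (by linarith [norm_nonneg ξ]) (by omega)
    calc _ ≤ _ := abs_add_le _ _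
      _ ≤ C * ‖ξ‖ ^ 2 * (1 + ‖ξ‖) ^ (l + l') + C' * ‖ξ‖ ^ 2 * (1 + ‖ξ‖) ^ (l + l') :=
        add_le_add ((h ξ).trans (by gcongr)) ((h' ξ).trans (by gcongr))
      _ = _ := by ring

lemma GG.zero_apply {d m : ℕ} {δ : ℝ} {g : Vd d → ℝ} (hg : GG d m δ g) : g 0 = 0 := by
  induction hg with
  | base k θ => simp [Tb]
  | coord j g _ ih => simp [ih]
  | smul c g _ ih => simp [ih]
  | add g h _ _ ih1 ih2 => simp [ih1, ih2]

lemma GG.hasFDerivAt_zero {d m : ℕ} {δ : ℝ} (hδ : 0 < δ) {g : Vd d → ℝ} (hg : GG d m δ g) :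
    HasFDerivAt g (0 : Vd d →L[ℝ] ℝ) 0 := by
  obtain ⟨C, hC, l, h⟩ := hg.bound hδ
  rw [hasFDerivAt_iff_tendsto]
  have ht : Tendsto (fun ξ : Vd d => C * ‖ξ‖ * (1 + ‖ξ‖) ^ l) (𝓝 0) (𝓝 0) := by
    have : Continuous (fun ξ : Vd d => C * ‖ξ‖ * (1 + ‖ξ‖) ^ l) := by fun_prop
    simpa using this.tendsto 0
  refine squeeze_zero (fun ξ => by positivity) (fun ξ => ?_) ht
  simp only [hg.zero_apply, sub_zero, ContinuousLinearMap.zero_apply, Real.norm_eq_abs]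
  by_cases hξ : ξ = 0
  · simp [hξ]
  · have hr : 0 < ‖ξ‖ := norm_pos_iff.2 hξ
    calc _ ≤ ‖ξ‖⁻¹ * (C * ‖ξ‖ ^ 2 * (1 + ‖ξ‖) ^ l) := by gcongr; exact h ξ
      _ = _ := by field_simp

lemma radial_deriv (m : ℕ) (δ : ℝ) (k : ℤ) (θ r : ℝ) (hr : 0 < r) :
    HasDerivAt (fun r : ℝ => r ^ k * Real.sin (1 / r ^ m + θ) * Real.exp (-δ / r ^ 2))
      (r * (k * (r ^ (k - 2) * Real.sin (1 / r ^ m + θ) * Real.exp (-δ / r ^ 2))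
        + (-m * (r ^ (k - m - 2) * Real.sin (1 / r ^ m + (θ + Real.pi / 2)) * Real.exp (-δ / r ^ 2))
        + 2 * δ * (r ^ (k - 4) * Real.sin (1 / r ^ m + θ) * Real.exp (-δ / r ^ 2))))) r := by
  have h1 := hasDerivAt_zpow k r (Or.inl hr.ne')
  have h2 : HasDerivAt (fun r : ℝ => 1 / r ^ m + θ) (-m * r ^ (-(m : ℤ) - 1)) r := by
    have := (hasDerivAt_zpow (-(m : ℤ)) r (Or.inl hr.ne')).add_const θ
    simpa using this
  have h3 : HasDerivAt (fun r : ℝ => -δ / r ^ 2) (2 * δ * r ^ (-3 : ℤ)) r := by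
    have := (hasDerivAt_zpow (-2 : ℤ) r (Or.inl hr.ne')).const_mul (-δ)
    refine (this.congr_deriv ?_).congr_of_eventuallyEq (Eventually.of_forall fun x => ?_)
    · norm_num; ring
    · simp only [div_eq_mul_inv, zpow_neg]; norm_cast
  have h := (h1.mul h2.sin).mul h3.exp
  refine h.congr_deriv ?_
  rw [← add_assoc (1 / r ^ m), Real.sin_add_pi_div_two]
  have hr' := hr.ne'
  have a1 : r ^ (k - 1) = r * r ^ (k - 2) := by
    rw [← zpow_one_add₀ hr']; congr 1; ring
  have a2 : r ^ k * r ^ (-(m : ℤ) - 1) = r * r ^ (k - m - 2) := by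
    rw [← zpow_one_add₀ hr', ← zpow_add₀ hr']; congr 1; ring
  have a3 : r ^ k * r ^ (-3 : ℤ) = r * r ^ (k - 4) := by
    rw [← zpow_one_add₀ hr', ← zpow_add₀ hr']; congr 1; ring
  set S := Real.sin (1 / r ^ m + θ)
  set c := Real.cos (1 / r ^ m + θ)
  set E := Real.exp (-δ / r ^ 2)
  simp only [Pi.mul_apply]
  linear_combination (k * S * E) * a1 + (-m * c * E) * a2 + (2 * δ * S * E) * a3

lemma norm_hasFDerivAt {d : ℕ} {ξ : Vd d} (hξ : ξ ≠ 0) :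
    HasFDerivAt (fun ξ : Vd d => ‖ξ‖) (‖ξ‖⁻¹ • innerSL ℝ ξ) ξ := by
  have hr : 0 < ‖ξ‖ := norm_pos_iff.2 hξ
  have h := (hasStrictFDerivAt_norm_sq ξ).hasFDerivAt.sqrt (by positivity)
  have h' : HasFDerivAt (fun ξ : Vd d => ‖ξ‖) _ ξ :=
    h.congr_of_eventuallyEq (Eventually.of_forall fun x => (Real.sqrt_sq (norm_nonneg x)).symm)
  refine h'.congr_fderiv ?_
  rw [Real.sqrt_sq hr.le]
  ext v
  simp
  field_simp

lemma GG.deriv {d m : ℕ} {δ : ℝ} {g : Vd d → ℝ} (hg : GG d m δ g) (i : Fin d) :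
    (∀ ξ, ξ ≠ 0 → DifferentiableAt ℝ g ξ) ∧
    ∃ h, GG d m δ h ∧ ∀ ξ, ξ ≠ 0 → fderiv ℝ g ξ (EuclideanSpace.single i 1) = h ξ := by
  induction hg with
  | base k θ =>
    have key : ∀ ξ : Vd d, ξ ≠ 0 → HasFDerivAt (Tb d m δ k θ) _ ξ := fun ξ hξ =>
      ((radial_deriv m δ k θ ‖ξ‖ (norm_pos_iff.2 hξ)).comp_hasFDerivAt ξ
        (norm_hasFDerivAt hξ)).congr_of_eventuallyEq (by
          filter_upwards [isOpen_ne.mem_nhds hξ] with x hx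
          simp only [Tb, if_neg hx, Function.comp])
    refine ⟨fun ξ hξ => (key ξ hξ).differentiableAt, _,
      GG.coord i _ (GG.add _ _ (GG.smul k _ (GG.base (k - 2) θ))
        (GG.add _ _ (GG.smul (-m) _ (GG.base (k - m - 2) (θ + Real.pi / 2)))
          (GG.smul (2 * δ) _ (GG.base (k - 4) θ)))), fun ξ hξ => ?_⟩
    rw [(key ξ hξ).fderiv]
    have hr : ‖ξ‖ ≠ 0 := norm_ne_zero_iff.2 hξ
    simp only [Tb, if_neg hξ, ContinuousLinearMap.smul_apply, innerSL_apply_apply, smul_eq_mul,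
      EuclideanSpace.inner_single_right, one_mul, conj_trivial]
    field_simp
  | coord j g _ ih =>
    obtain ⟨hd, h, hh, e⟩ := ih
    have key : ∀ ξ : Vd d, ξ ≠ 0 → HasFDerivAt (fun ξ : Vd d => ξ j * g ξ) _ ξ := fun ξ hξ =>
      (EuclideanSpace.proj (𝕜 := ℝ) j).hasFDerivAt.mul (hd ξ hξ).hasFDerivAt
    refine ⟨fun ξ hξ => (key ξ hξ).differentiableAt, _,
      GG.add _ _ (GG.coord j _ hh)
        (GG.smul ((EuclideanSpace.single i (1 : ℝ) : Vd d) j) g ‹_›), fun ξ hξ => ?_⟩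
    rw [(key ξ hξ).fderiv]
    change ξ j * fderiv ℝ g ξ (EuclideanSpace.single i 1) +
      g ξ * (EuclideanSpace.single i (1 : ℝ) : Vd d) j = _
    rw [e ξ hξ]
    ring
  | smul c g _ ih =>
    obtain ⟨hd, h, hh, e⟩ := ih
    refine ⟨fun ξ hξ => (hd ξ hξ).const_mul c, _, GG.smul c _ hh, fun ξ hξ => ?_⟩
    rw [((hd ξ hξ).hasFDerivAt.const_mul c).fderiv]
    simp [e ξ hξ]
  | add g g' _ _ ih1 ih2 =>
    obtain ⟨hd, h, hh, e⟩ := ih1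
    obtain ⟨hd', h', hh', e'⟩ := ih2
    refine ⟨fun ξ hξ => (hd ξ hξ).add (hd' ξ hξ), _, GG.add _ _ hh hh', fun ξ hξ => ?_⟩
    rw [((hd ξ hξ).hasFDerivAt.fun_add (hd' ξ hξ).hasFDerivAt).fderiv]
    simp [e ξ hξ, e' ξ hξ]

lemma GG.pderiv1 {d m : ℕ} {δ : ℝ} (hδ : 0 < δ) {g : Vd d → ℝ} (hg : GG d m δ g) (i : Fin d) :
    GG d m δ (pderiv1 i g) := by
  obtain ⟨_, h, hh, e⟩ := hg.deriv i
  have : _root_.pderiv1 i g = h := by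
    funext ξ
    by_cases hξ : ξ = 0
    · subst hξ
      rw [_root_.pderiv1, (hg.hasFDerivAt_zero hδ).fderiv, hh.zero_apply]
      simp
    · exact e ξ hξ
  rw [this]
  exact hh

lemma GG.iter {d m : ℕ} {δ : ℝ} (hδ : 0 < δ) (i : Fin d) (n : ℕ) :
    ∀ {g : Vd d → ℝ}, GG d m δ g → GG d m δ ((_root_.pderiv1 i)^[n] g) := by
  induction n with
  | zero => intro g hg; simpa using hg
  | succ n ih => intro g hg; rw [Function.iterate_succ_apply]; exact ih (hg.pderiv1 hδ i)

lemma GG.foldr {d m : ℕ} {δ : ℝ} (L : List ((Vd d → ℝ) → (Vd d → ℝ)))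
    (hL : ∀ op ∈ L, ∀ g, GG d m δ g → GG d m δ (op g)) {f : Vd d → ℝ} (hf : GG d m δ f) :
    GG d m δ (L.foldr (fun op g => op g) f) := by
  induction L with
  | nil => simpa using hf
  | cons a L ih =>
    rw [List.foldr_cons]
    exact hL a (by simp) _ (ih fun op hop => hL op (by simp [hop]))

lemma GG.fdelta (d m : ℕ) (δ : ℝ) : GG d m δ (fdelta d m δ) := by
  have : _root_.fdelta d m δ = Tb d m δ ((m + 2 : ℕ) : ℤ) 0 := by
    funext ξ
    simp only [_root_.fdelta, Tb, zpow_natCast, add_zero]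
  rw [this]
  exact GG.base _ _

/-- For `m ≥ 2`, `δ > 0` and every multi-index `β`, there are a constant
`C > 0` and an integer `l ≥ 1` such that `|(D^β f_δ)(ξ)| ≤ C(1 + |ξ|^l)` for all `ξ`. -/
theorem stmt5 (d m : ℕ) (hm : 2 ≤ m) (δ : ℝ) (hδ : 0 < δ) (β : Fin d → ℕ) :
    ∃ C : ℝ, 0 < C ∧ ∃ l : ℕ, 1 ≤ l ∧
      ∀ ξ : Vd d, |Dmulti β (fdelta d m δ) ξ| ≤ C * (1 + ‖ξ‖ ^ l) := by
  have hG : GG d m δ (Dmulti β (fdelta d m δ)) := by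
    refine GG.foldr _ ?_ (GG.fdelta d m δ)
    intro op hop g hg
    obtain ⟨i, rfl⟩ := (List.mem_ofFn' _ _).1 hop
    exact GG.iter hδ i _ hg
  obtain ⟨C, hC, l, h⟩ := hG.bound hδ
  refine ⟨C * 2 ^ (l + 1), by positivity, l + 2, by omega, fun ξ => (h ξ).trans ?_⟩
  have hr := norm_nonneg ξ
  have h1 := add_pow_le (zero_le_one (α := ℝ)) hr (l + 2)
  have h2 : ‖ξ‖ ^ 2 * (1 + ‖ξ‖) ^ l ≤ (1 + ‖ξ‖) ^ (l + 2) := by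
    rw [pow_add, mul_comm]
    gcongr
    linarith
  rw [one_pow, show l + 2 - 1 = l + 1 by omega] at h1
  calc _ = C * (‖ξ‖ ^ 2 * (1 + ‖ξ‖) ^ l) := by ring
    _ ≤ C * (2 ^ (l + 1) * (1 + ‖ξ‖ ^ (l + 2))) :=
      mul_le_mul_of_nonneg_left (h2.trans h1) hC.le
    _ = _ := by ring

end
end

section
/- Fix an integer m ≥ 2 and M = {M_β}_{|β|≤m} ⊆ ℂ, and for δ > 0 let μ_{1/δ} ∈ 𝓜_m^M be the measure whose Fourier transform is φ_δ. Then for all δ_1, δ_2 > 0, d_m(μ_{1/δ_1}, μ_{1/δ_2}) ≤ |δ_1 − δ_2|. -/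
open MeasureTheory Filter Topology
open scoped ENNReal NNReal

noncomputable section
open scoped Classical


theorem abs_exp_neg_sub_le {a b : ℝ} (ha : 0 ≤ a) (hb : 0 ≤ b) :
    |Real.exp (-a) - Real.exp (-b)| ≤ |a - b| := by
  have key : ∀ a b : ℝ, 0 ≤ a → a ≤ b → |Real.exp (-a) - Real.exp (-b)| ≤ |a - b| := by
    intro a b ha hab
    have h1 : Real.exp (-b) ≤ Real.exp (-a) := Real.exp_le_exp.2 (by linarith)
    have h2 : Real.exp (-b) = Real.exp (-a) * Real.exp (a - b) := by
      rw [← Real.exp_add]; congr 1; ring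
    have h3 := Real.add_one_le_exp (a - b)
    have h4 : Real.exp (-a) ≤ 1 := Real.exp_le_one_iff.2 (by linarith)
    have h5 := Real.exp_pos (-a)
    rw [abs_of_nonneg (by linarith), abs_of_nonpos (by linarith), h2]
    nlinarith
  rcases le_total a b with h | h
  · exact key a b ha h
  · rw [abs_sub_comm, abs_sub_comm a b]; exact key b a hb h

/-- For `m ≥ 2` and prescribed moments `M`, let `μ_{1/δ} ∈ 𝓜_m^M` (for `δ > 0`)
be the measure whose Fourier transform is `φ_δ`. Then `d_m(μ_{1/δ₁}, μ_{1/δ₂}) ≤ |δ₁ - δ₂|`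
for all `δ₁, δ₂ > 0`. -/
theorem stmt7 (d m : ℕ) (hm : 2 ≤ m) (M : (Fin d → ℕ) → ℂ)
    (μ : ℝ → ComplexMeasure (Vd d))
    (hμ : ∀ δ : ℝ, 0 < δ → μ δ ∈ MomentSet d m M ∧ ftc (μ δ) = phiFun d m M δ)
    (δ₁ δ₂ : ℝ) (h₁ : 0 < δ₁) (h₂ : 0 < δ₂) :
    dm m (μ δ₁) (μ δ₂) ≤ ENNReal.ofReal |δ₁ - δ₂| := by
  unfold dm
  refine iSup_le ?_
  rintro ⟨ξ, hξ⟩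
  apply ENNReal.ofReal_le_ofReal
  rw [(hμ δ₁ h₁).2, (hμ δ₂ h₂).2]
  simp only [phiFun, if_neg hξ]
  have hr : 0 < ‖ξ‖ := norm_pos_iff.2 hξ
  generalize ‖ξ‖ = r at hr
  generalize Ppoly d m M ξ = p
  rw [div_le_iff₀ (by positivity), ← sub_mul, add_sub_add_left_eq_sub, ← Complex.ofReal_sub,
    ← Complex.ofReal_mul, Complex.norm_real, Real.norm_eq_abs, ← mul_sub]
  rw [abs_mul, abs_mul, abs_mul, Real.abs_exp, abs_of_nonneg (show 0 ≤ r ^ (m + 2) by positivity)]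
  have hs := Real.abs_sin_le_one (1 / r ^ m)
  have he : Real.exp (-r ^ (2 * m)) ≤ 1 :=
    Real.exp_le_one_iff.2 (by have : 0 ≤ r ^ (2 * m) := by positivity
                              linarith)
  have hd := abs_exp_neg_sub_le (a := δ₁ / r ^ 2) (b := δ₂ / r ^ 2) (by positivity) (by positivity)
  rw [← sub_div, abs_div, abs_of_nonneg (show 0 ≤ r ^ 2 by positivity), ← neg_div, ← neg_div] at hd
  calc _ ≤ r ^ (m + 2) * 1 * (|δ₁ - δ₂| / r ^ 2) * 1 := by gcongr
    _ = |δ₁ - δ₂| * r ^ m := by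
      rw [pow_add]; field_simp

end
end
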